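/- arXiv:2503.02536 — 2 statements merged into one kernel-verified Lean document; each statement's English description precedes it below -/
import Mathlib

section
/- Assume m ≥ n+1, that f_1,…,f_m satisfy the SNC hypothesis, and that d_i ≥ 2 for all i. Let Der(A) = {θ ∈ R^n : f_i divides Σ_{j=1}^n θ_j·∂f_i/∂x_j in R, for all i = 1,…,m} be the module of derivations tangent to the arrangement. Then Der(A) is generated as an R-module by the Euler vector (x_1,…,x_n) together with the vectors π(c_T), where T ranges over all (m+1)-element subsets of the columns of Q_{∖1}, c_T is the corresponding circuit vector, and π : R^{m+n−1} → R^n is the projection onto the last n coordinates. -/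
open MvPolynomial

noncomputable section

/-- The polynomial ring `R = ℂ[x_1,…,x_n]`. -/
abbrev Rp (n : ℕ) := MvPolynomial (Fin n) ℂ

/-- The polynomial ring `S = ℂ[s_1,…,s_m,x_1,…,x_n]`; `Sum.inl i ↦ s_i`, `Sum.inr j ↦ x_j`. -/
abbrev Sp (n m : ℕ) := MvPolynomial (Fin m ⊕ Fin n) ℂ

/-- The inclusion `R ⊆ S`. -/
def toS (n m : ℕ) : Rp n →ₐ[ℂ] Sp n m := rename Sum.inr

/-- Column index set for `Q_{∖1}`: diagonal columns `2,…,m` and the `n` Jacobian columns. -/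
abbrev Col (n m : ℕ) := {k : Fin m // (k : ℕ) ≠ 0} ⊕ Fin n

/-- The SNC (strict normal crossing) hypothesis, via the Jacobian criterion. -/
def SNC (n m : ℕ) (f : Fin m → Rp n) : Prop :=
  (∀ i, Irreducible (f i)) ∧
  ∀ I : Finset (Fin m), 1 ≤ I.card → I.card ≤ n →
    ∀ p : Fin n → ℂ, p ≠ 0 → (∀ i ∈ I, eval p (f i) = 0) →
      (Matrix.of fun (i : I) (j : Fin n) => eval p (pderiv j (f i.1))).rank = I.card

/-- The matrix `Q = (diag(f_1,…,f_m) | J_f)`. -/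
def Qmat (n m : ℕ) (f : Fin m → Rp n) : Matrix (Fin m) (Fin m ⊕ Fin n) (Rp n) :=
  Matrix.of fun i => Sum.elim (fun k => if i = k then f i else 0) (fun j => pderiv j (f i))

/-- The matrix `Q_{∖1}`, obtained from `Q` by deleting the first column. -/
def Q1 (n m : ℕ) (f : Fin m → Rp n) : Matrix (Fin m) (Col n m) (Rp n) :=
  Matrix.of fun i => Sum.elim (fun k => if i = (k : Fin m) then f i else 0)
    (fun j => pderiv j (f i))

/-- The matrix `Q^s_{∖1}`: `Q_{∖1}` (over `S`) with the row `(s_2,…,s_m,0,…,0)` appended. -/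
def Qs1 (n m : ℕ) (f : Fin m → Rp n) : Matrix (Option (Fin m)) (Col n m) (Sp n m) :=
  Matrix.of fun i? c =>
    i?.elim (Sum.elim (fun k : {k : Fin m // (k : ℕ) ≠ 0} => (X (Sum.inl (k : Fin m)) : Sp n m)) (fun _ : Fin n => (0 : Sp n m)) c)
      (fun i => toS n m (Q1 n m f i c))

/-- The ideal generated by all `k × k` minors of a matrix. -/
def minorsIdeal {A : Type*} [CommRing A] {ι κ : Type*} (k : ℕ) (M : Matrix ι κ A) : Ideal A :=
  Ideal.span {x | ∃ r : Fin k → ι, ∃ c : Fin k → κ,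
    Function.Injective r ∧ Function.Injective c ∧ x = (M.submatrix r c).det}

/-- `h_j = Σ_i s_i·(Π_{k≠i} f_k)·∂f_i/∂x_j`. -/
def hpoly (n m : ℕ) (f : Fin m → Rp n) (j : Fin n) : Sp n m :=
  ∑ i, X (Sum.inl i) * toS n m (((Finset.univ.erase i).prod f) * pderiv j (f i))

/-- The linear form `Σ_i d_i·s_i`. -/
def linForm (n m : ℕ) (d : Fin m → ℕ) : Sp n m := ∑ i, (d i : Sp n m) * X (Sum.inl i)

/-- The likelihood ideal `I_A`: contraction to `S` of the ideal `⟨h_1,…,h_n⟩` of `S_f`. -/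
def IA (n m : ℕ) (f : Fin m → Rp n) : Ideal (Sp n m) :=
  (Ideal.span (Set.range fun j =>
      algebraMap (Sp n m) (Localization.Away (toS n m (∏ i, f i))) (hpoly n m f j))).comap
    (algebraMap (Sp n m) (Localization.Away (toS n m (∏ i, f i))))

/-- Linear order on the columns of `Q_{∖1}`: diagonal columns first, then Jacobian columns. -/
def colIdx (n m : ℕ) : Col n m → ℕ :=
  Sum.elim (fun k => ((k : Fin m) : ℕ)) (fun j => m + (j : ℕ))

instance (n m : ℕ) : LinearOrder (Col n m) :=
  LinearOrder.lift' (colIdx n m) (by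
    rintro (⟨k, hk⟩ | j) (⟨k', hk'⟩ | j') h <;>
      simp only [colIdx, Sum.elim_inl, Sum.elim_inr] at h
    · exact congrArg Sum.inl (Subtype.ext (Fin.val_injective h))
    · exact absurd h (by have := k.isLt; omega)
    · exact absurd h (by have := k'.isLt; omega)
    · exact congrArg Sum.inr (Fin.val_injective (by omega)))

/-- The circuit vector `c_T` attached to an `(m+1)`-element subset `T` of the columns of
`Q_{∖1}`: its entry at the `k`-th smallest element `t_k` of `T` is
`(−1)^k · det(Q_{∖1}[T ∖ {t_k}])` (the columns of `T ∖ {t_k}` taken in increasing order,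
via `k.succAbove`), and it vanishes outside `T`. -/
def circuit (n m : ℕ) (f : Fin m → Rp n) (T : Finset (Col n m)) (hT : T.card = m + 1) :
    Col n m → Rp n := fun c =>
  ∑ k : Fin (m + 1),
    if c = T.orderEmbOfFin hT k then
      (-1 : Rp n) ^ (k : ℕ) *
        ((Q1 n m f).submatrix id fun l : Fin m => T.orderEmbOfFin hT (k.succAbove l)).det
    else 0

section DepthPart
open CategoryTheory CategoryTheory.Abelian

/-- The irrelevant ideal. -/
def irrel (n : ℕ) : Ideal (Rp n) := Ideal.ofList (List.ofFn fun i : Fin n => (X i : Rp n))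

lemma X_mem_irrel (n : ℕ) (i : Fin n) : (X i : Rp n) ∈ irrel n :=
  Ideal.subset_span (by simp)

lemma irrel_eq (n : ℕ) : irrel n = Ideal.span (X '' (Set.univ : Set (Fin n))) := by
  unfold irrel Ideal.ofList
  congr 1
  ext x
  simp

lemma one_notMem_irrel (n : ℕ) : (1 : Rp n) ∉ irrel n := by
  rw [irrel_eq, mem_ideal_span_X_image]
  intro h
  obtain ⟨i, -, hi⟩ := h 0 (by simp)
  simp at hi

/-- `D n t M` : the depth of `M` at the origin is at least `t`. -/
def DepthGE (n t : ℕ) (M : Type) [AddCommGroup M] [Module (Rp n) M] : Prop :=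
  ∀ i < t, Subsingleton
    (Ext.{0} (ModuleCat.of (Rp n) (Rp n ⧸ irrel n)) (ModuleCat.of (Rp n) M) i)

lemma DepthGE.mono {n t t' : ℕ} {M : Type} [AddCommGroup M] [Module (Rp n) M]
    (h : DepthGE n t M) (htt : t' ≤ t) : DepthGE n t' M :=
  fun i hi => h i (lt_of_lt_of_le hi htt)

lemma DepthGE.of_subsingleton (n t : ℕ) {M : Type} [AddCommGroup M] [Module (Rp n) M]
    [Subsingleton M] : DepthGE n t M := by
  intro i _
  have hz : Limits.IsZero (ModuleCat.of (Rp n) M) := ModuleCat.isZero_of_subsingleton _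
  refine ⟨fun a b => ?_⟩
  have key : ∀ a : Ext.{0} (ModuleCat.of (Rp n) (Rp n ⧸ irrel n)) (ModuleCat.of (Rp n) M) i,
      a = 0 := by
    intro a
    rw [← Ext.comp_mk₀_id a, hz.eq_of_src (𝟙 _) 0]
    simp
  rw [key a, key b]

lemma DepthGE.of_ses {n t : ℕ} {A B C : Type} [AddCommGroup A] [Module (Rp n) A]
    [AddCommGroup B] [Module (Rp n) B] [AddCommGroup C] [Module (Rp n) C]
    (f : A →ₗ[Rp n] B) (g : B →ₗ[Rp n] C) (hf : Function.Injective f)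
    (hg : Function.Surjective g) (hfg : Function.Exact f g)
    (hA : DepthGE n (t + 1) A) (hB : DepthGE n t B) : DepthGE n t C := by
  intro i hi
  have hS : (ModuleCat.shortComplexOfCompEqZero f g hfg.linearMap_comp_eq_zero).ShortExact :=
    { exact := ModuleCat.shortComplex_exact _ hfg
      mono_f := by simpa [ModuleCat.mono_iff_injective] using hf
      epi_g := by simpa [ModuleCat.epi_iff_surjective] using hg }
  have h1 := hA (i + 1) (by omega)
  have h2 := hB i hi
  have key : ∀ a : Ext.{0} (ModuleCat.of (Rp n) (Rp n ⧸ irrel n)) (ModuleCat.of (Rp n) C) i,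
      a = 0 := by
    intro a
    obtain ⟨x, hx⟩ := Ext.covariant_sequence_exact₃ _ hS a rfl (Subsingleton.elim _ _)
    rw [← hx, Subsingleton.elim x 0]
    simp
  exact ⟨fun a b => by rw [key a, key b]⟩

lemma X_weaklyRegular (n : ℕ) : RingTheory.Sequence.IsWeaklyRegular (Rp n)
    (List.ofFn fun i : Fin n => (X i : Rp n)) := by
  constructor
  intro i hi
  have hin : i < n := by simpa using hi
  have hI : (Ideal.ofList ((List.ofFn fun i : Fin n => (X i : Rp n)).take i) •
      (⊤ : Submodule (Rp n) (Rp n))) = Ideal.span (X '' {j : Fin n | (j : ℕ) < i}) := by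
    rw [smul_eq_mul, Ideal.mul_top]
    unfold Ideal.ofList
    congr 1
    ext x
    simp only [Set.mem_ofPred_eq, Set.mem_image, List.mem_take_iff_getElem, List.length_ofFn,
      List.getElem_ofFn]
    constructor
    · rintro ⟨j, hj, rfl⟩
      exact ⟨⟨j, by omega⟩, by simp; omega, rfl⟩
    · rintro ⟨j, hj, rfl⟩
      exact ⟨j, by omega, rfl⟩
  rw [hI]
  rw [isSMulRegular_iff_right_eq_zero_of_smul]
  intro x hx
  induction x using Submodule.Quotient.induction_on with
  | H x =>
  rw [← Submodule.Quotient.mk_smul, Submodule.Quotient.mk_eq_zero] at hx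
  rw [Submodule.Quotient.mk_eq_zero]
  simp only [List.getElem_ofFn, smul_eq_mul] at hx
  rw [mem_ideal_span_X_image] at hx ⊢
  intro s hs
  obtain ⟨j, hj, hj'⟩ := hx (Finsupp.single ⟨i, hin⟩ 1 + s) (by
    rw [MvPolynomial.mem_support_iff] at hs ⊢
    rwa [MvPolynomial.coeff_X_mul])
  refine ⟨j, hj, ?_⟩
  have : (⟨i, hin⟩ : Fin n) ≠ j := by
    rintro rfl
    simp at hj
  simpa [Finsupp.single_apply, this] using hj'

lemma DepthGE.of_free (n : ℕ) {M : Type} [AddCommGroup M] [Module (Rp n) M]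
    [Module.Free (Rp n) M] [Module.Finite (Rp n) M] : DepthGE n n M := by
  cases subsingleton_or_nontrivial M with
  | inl h => exact DepthGE.of_subsingleton n n
  | inr h =>
  have hne : irrel n • (⊤ : Submodule (Rp n) M) ≠ ⊤ := by
    intro h
    let b := Module.Free.chooseBasis (Rp n) M
    obtain ⟨i⟩ : Nonempty (Module.Free.ChooseBasisIndex (Rp n) M) := b.index_nonempty
    have h1 : b i ∈ irrel n • (⊤ : Submodule (Rp n) M) := by rw [h]; trivial
    have h2 : b.coord i (b i) ∈ Submodule.map (b.coord i) (irrel n • (⊤ : Submodule (Rp n) M)) :=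
      Submodule.mem_map_of_mem h1
    rw [Submodule.map_smul''] at h2
    have h4 : (1 : Rp n) ∈ irrel n := by
      have h5 : irrel n • Submodule.map (b.coord i) ⊤ ≤ irrel n := by
        refine Submodule.smul_le.mpr fun r hr x _ => ?_
        rw [smul_eq_mul]
        exact Ideal.mul_mem_right _ _ hr
      have := h5 h2
      simpa using this
    exact one_notMem_irrel n h4
  have hw : RingTheory.Sequence.IsWeaklyRegular M (List.ofFn fun i : Fin n => (X i : Rp n)) :=
    ((TensorProduct.rid (Rp n) M).isWeaklyRegular_congr _).mp
      ((X_weaklyRegular n).isWeaklyRegular_lTensor)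
  have hlen : (List.ofFn fun i : Fin n => (X i : Rp n)).length = n := by simp
  intro i hi
  refine ModuleCat.subsingleton_ext_of_exists_isRegular (irrel n)
    (ModuleCat.of (Rp n) (Rp n ⧸ irrel n)) ?_ (ModuleCat.of (Rp n) M) (lt_top_iff_ne_top.mpr hne)
    (List.ofFn fun i : Fin n => (X i : Rp n)) ?_ ⟨hw, Ne.symm hne⟩ i (by rw [hlen]; exact hi)
  · rw [Module.support_eq_zeroLocus, Ideal.annihilator_quotient]
  · intro r hr
    obtain ⟨j, rfl⟩ := (List.mem_ofFn' _ _).mp hr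
    exact X_mem_irrel n j

/-- no nonzero element killed by all variables -/
lemma DepthGE.socle {n : ℕ} {M : Type} [AddCommGroup M] [Module (Rp n) M]
    (h : DepthGE n 1 M) (w : M) (hw : ∀ j : Fin n, (X j : Rp n) • w = 0) : w = 0 := by
  have h0 := h 0 (by omega)
  have : Subsingleton (ModuleCat.of (Rp n) (Rp n ⧸ irrel n) ⟶ ModuleCat.of (Rp n) M) :=
    Ext.addEquiv₀.subsingleton_congr.mp h0
  have : Subsingleton ((Rp n ⧸ irrel n) →ₗ[Rp n] M) :=
    (ModuleCat.homAddEquiv (M := ModuleCat.of (Rp n) (Rp n ⧸ irrel n))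
      (N := ModuleCat.of (Rp n) M)).symm.subsingleton
  let φ : (Rp n ⧸ irrel n) →ₗ[Rp n] M := (irrel n).liftQ (LinearMap.toSpanSingleton (Rp n) M w) (by
    rw [irrel, Ideal.ofList, Submodule.span_le]
    intro x hx
    obtain ⟨j, rfl⟩ := (List.mem_ofFn' _ _).mp hx
    simpa using hw j)
  have h2 : φ ((irrel n).mkQ 1) = 0 := by
    rw [Subsingleton.elim φ 0]; simp
  rw [Submodule.mkQ_apply] at h2
  have h3 := (Submodule.liftQ_apply (irrel n) (LinearMap.toSpanSingleton (Rp n) M w) (1 : Rp n)).symm.trans h2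
  simpa using h3

lemma DepthGE.torsion_free {n : ℕ} {M : Type} [AddCommGroup M] [Module (Rp n) M]
    (h : DepthGE n 1 M) (w : M)
    (hw : ∀ j : Fin n, ∃ N : ℕ, (X j : Rp n) ^ N • w = 0) : w = 0 := by
  by_contra hw0
  -- process variables one at a time
  have key : ∀ s : Finset (Fin n), ∃ u : M, u ≠ 0 ∧ (∀ j ∈ s, (X j : Rp n) • u = 0) ∧
      (∀ j : Fin n, ∃ N : ℕ, (X j : Rp n) ^ N • u = 0) := by
    intro s
    induction s using Finset.induction_on with
    | empty => exact ⟨w, hw0, by simp, hw⟩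
    | insert a s ha ih =>
      obtain ⟨u, hu0, hus, huN⟩ := ih
      classical
      have hex := huN a
      have hpos : Nat.find hex ≠ 0 := by
        intro h0
        have := Nat.find_spec hex
        rw [h0] at this
        exact hu0 (by simpa using this)
      refine ⟨(X a : Rp n) ^ (Nat.find hex - 1) • u, ?_, ?_, ?_⟩
      · exact Nat.find_min hex (by omega)
      · intro j hj
        rcases Finset.mem_insert.mp hj with rfl | hj
        · rw [smul_smul, ← pow_succ', Nat.sub_add_cancel (by omega)]
          exact Nat.find_spec hex
        · rw [smul_comm, hus j hj, smul_zero]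
      · intro j
        obtain ⟨N, hN⟩ := huN j
        exact ⟨N, by rw [smul_comm, hN, smul_zero]⟩
  obtain ⟨u, hu0, hu, -⟩ := key Finset.univ
  exact hu0 (h.socle u fun j => hu j (Finset.mem_univ j))

lemma DepthGE.torsion_free' {n : ℕ} {M : Type} [AddCommGroup M] [Module (Rp n) M]
    (h : DepthGE n 1 M) (s : Set (Rp n)) (hs : ∀ j, (X j : Rp n) ∈ (Ideal.span s).radical)
    (w : M) (e : ℕ) (hw : ∀ a ∈ s, a ^ e • w = 0) : w = 0 := by
  refine h.torsion_free w fun j => ?_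
  have h1 : Ideal.span s ≤ (Ideal.torsionOf (Rp n) M w).radical := by
    rw [Ideal.span_le]
    intro a ha
    exact ⟨e, by simpa [Ideal.mem_torsionOf_iff] using hw a ha⟩
  obtain ⟨N, hN⟩ := (Ideal.radical_le_radical_iff.mpr h1) (hs j)
  exact ⟨N, by simpa [Ideal.mem_torsionOf_iff] using hN⟩

end DepthPart

section ExtPart

section Contraction
variable {R : Type} [CommRing R] {G : Type} [AddCommGroup G] [Module R G]

/-- Contraction of an element of the exterior algebra by a linear form. -/
def con (φ : Module.Dual R G) : ExteriorAlgebra R G →ₗ[R] ExteriorAlgebra R G :=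
  CliffordAlgebra.contractLeft (Q := (0 : QuadraticForm R G)) φ

lemma con_ι_mul (φ : Module.Dual R G) (a : G) (b : ExteriorAlgebra R G) :
    con φ (ExteriorAlgebra.ι R a * b) = φ a • b - ExteriorAlgebra.ι R a * con φ b :=
  CliffordAlgebra.contractLeft_ι_mul φ a b

lemma con_one (φ : Module.Dual R G) : con φ (1 : ExteriorAlgebra R G) = 0 :=
  CliffordAlgebra.contractLeft_one _ φ

lemma con_ι (φ : Module.Dual R G) (a : G) :
    con φ (ExteriorAlgebra.ι R a) = algebraMap R _ (φ a) :=
  CliffordAlgebra.contractLeft_ι _ φ a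

lemma con_con (φ : Module.Dual R G) (x : ExteriorAlgebra R G) : con φ (con φ x) = 0 :=
  CliffordAlgebra.contractLeft_contractLeft φ x

lemma con_comm (φ ψ : Module.Dual R G) (x : ExteriorAlgebra R G) :
    con φ (con ψ x) = - con ψ (con φ x) :=
  CliffordAlgebra.contractLeft_comm φ ψ x

lemma con_zero_deg (φ : Module.Dual R G) (x : ExteriorAlgebra R G) (hx : x ∈ ⋀[R]^0 G) :
    con φ x = 0 := by
  rw [ExteriorAlgebra.exteriorPower, pow_zero, Submodule.mem_one] at hx
  obtain ⟨r, rfl⟩ := hx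
  exact CliffordAlgebra.contractLeft_algebraMap _ φ r

lemma ι_mul_mem (g : G) {p : ℕ} {x : ExteriorAlgebra R G} (hx : x ∈ ⋀[R]^p G) :
    ExteriorAlgebra.ι R g * x ∈ ⋀[R]^(p + 1) G := by
  rw [ExteriorAlgebra.exteriorPower, pow_succ']
  exact Submodule.mul_mem_mul (LinearMap.mem_range_self _ g) hx

lemma con_mem (φ : Module.Dual R G) (p : ℕ) : ∀ x : ExteriorAlgebra R G,
    x ∈ ⋀[R]^(p + 1) G → con φ x ∈ ⋀[R]^p G := by
  induction p with
  | zero =>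
    intro x hx
    rw [ExteriorAlgebra.exteriorPower, pow_succ'] at hx
    induction hx using Submodule.mul_induction_on' with
    | mem_mul_mem a ha b hb =>
      obtain ⟨a, rfl⟩ := ha
      rw [con_ι_mul, con_zero_deg φ b hb, mul_zero, sub_zero]
      exact Submodule.smul_mem _ _ hb
    | add x _ y _ hx hy => rw [map_add]; exact Submodule.add_mem _ hx hy
  | succ p ih =>
    intro x hx
    rw [ExteriorAlgebra.exteriorPower, pow_succ'] at hx
    induction hx using Submodule.mul_induction_on' with
    | mem_mul_mem a ha b hb =>
      obtain ⟨a, rfl⟩ := ha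
      rw [con_ι_mul]
      exact Submodule.sub_mem _ (Submodule.smul_mem _ _ hb) (ι_mul_mem a (ih b hb))
    | add x _ y _ hx hy => rw [map_add]; exact Submodule.add_mem _ hx hy

/-- Expansion of the contraction of a decomposable element. -/
lemma con_ιMulti (φ : Module.Dual R G) (p : ℕ) : ∀ v : Fin (p + 1) → G,
    con φ (ExteriorAlgebra.ιMulti R (p + 1) v) =
      ∑ k : Fin (p + 1), ((-1) ^ (k : ℕ) * φ (v k)) •
        ExteriorAlgebra.ιMulti R p (fun l => v (k.succAbove l)) := by
  induction p with
  | zero =>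
    intro v
    rw [ExteriorAlgebra.ιMulti_succ_apply, con_ι_mul]
    simp [ExteriorAlgebra.ιMulti_zero_apply, con_one]
  | succ p ih =>
    intro v
    rw [ExteriorAlgebra.ιMulti_succ_apply, con_ι_mul, ih, sub_eq_add_neg,
      Finset.mul_sum, ← Finset.sum_neg_distrib]
    conv_rhs => rw [Fin.sum_univ_succ]
    congr 1
    · simp [Matrix.vecTail, Function.comp_def]
    · refine Finset.sum_congr rfl fun k _ => ?_
      rw [ExteriorAlgebra.ιMulti_succ_apply (n := p), mul_smul_comm, ← neg_smul]
      simp [Matrix.vecTail, Function.comp_def, pow_succ]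

/-- Iterated contraction: the head of the list is contracted first. -/
def conL : List (Module.Dual R G) → (ExteriorAlgebra R G →ₗ[R] ExteriorAlgebra R G)
  | [] => LinearMap.id
  | a :: L => conL L ∘ₗ con a

lemma conL_cons (a : Module.Dual R G) (L : List (Module.Dual R G)) (x : ExteriorAlgebra R G) :
    conL (a :: L) x = conL L (con a x) := rfl

lemma conL_nil (x : ExteriorAlgebra R G) : conL ([] : List (Module.Dual R G)) x = x := rfl

lemma conL_concat (L : List (Module.Dual R G)) (a : Module.Dual R G) (x : ExteriorAlgebra R G) :
    conL (L.concat a) x = con a (conL L x) := by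
  induction L generalizing x with
  | nil => rfl
  | cons b L ih => rw [List.concat_cons, conL_cons, conL_cons, ih]

lemma conL_mem (L : List (Module.Dual R G)) (p : ℕ) : ∀ x : ExteriorAlgebra R G,
    x ∈ ⋀[R]^(p + L.length) G → conL L x ∈ ⋀[R]^p G := by
  induction L with
  | nil => intro x hx; exact hx
  | cons a L ih =>
    intro x hx
    exact ih _ (con_mem a _ x hx)

lemma con_conL (a : Module.Dual R G) (L : List (Module.Dual R G)) : ∀ x : ExteriorAlgebra R G,
    conL L (con a x) = (-1 : R) ^ L.length • con a (conL L x) := by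
  induction L with
  | nil => intro x; simp [conL_nil]
  | cons b L ih =>
    intro x
    rw [conL_cons, con_comm b a, map_neg, ih, conL_cons, List.length_cons, pow_succ]
    simp

lemma conL_con_of_mem (a : Module.Dual R G) (L : List (Module.Dual R G)) (ha : a ∈ L) :
    ∀ x : ExteriorAlgebra R G, conL L (con a x) = 0 := by
  induction L with
  | nil => simp at ha
  | cons b L ih =>
    intro x
    rcases List.mem_cons.mp ha with rfl | h
    · rw [conL_cons, con_con, map_zero]
    · rw [conL_cons, con_comm b a, map_neg, ih h, neg_zero]

lemma conL_ιMulti (p : ℕ) : ∀ (φ : Fin p → Module.Dual R G) (v : Fin p → G),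
    conL (List.ofFn φ) (ExteriorAlgebra.ιMulti R p v) =
      algebraMap R _ (Matrix.of fun i j => φ i (v j)).det := by
  induction p with
  | zero =>
    intro φ v
    simp [conL_nil, ExteriorAlgebra.ιMulti_zero_apply]
  | succ p ih =>
    intro φ v
    rw [List.ofFn_succ, conL_cons, con_ιMulti, map_sum, Matrix.det_succ_row_zero, map_sum]
    refine Finset.sum_congr rfl fun k _ => ?_
    rw [map_smul, ih, Algebra.smul_def, ← map_mul]
    rfl

end Contraction

section Boundaries
variable {R : Type} [CommRing R] {G : Type} [AddCommGroup G] [Module R G]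
variable {σ : Type} [DecidableEq σ] (r : σ → Module.Dual R G)

/-- Sum of the images of the contractions by the linear forms `r i`, `i ∈ S`, in degree `p`. -/
def Bd (S : Finset σ) (p : ℕ) : Submodule R (ExteriorAlgebra R G) :=
  ⨆ i ∈ S, (⋀[R]^(p + 1) G).map (con (r i))

lemma con_mem_Bd {S : Finset σ} {p : ℕ} {i : σ} (hi : i ∈ S) {y : ExteriorAlgebra R G}
    (hy : y ∈ ⋀[R]^(p + 1) G) : con (r i) y ∈ Bd r S p :=
  (le_iSup₂_of_le (f := fun i (_ : i ∈ S) => (⋀[R]^(p + 1) G).map (con (r i))) i hi le_rfl)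
    (Submodule.mem_map_of_mem hy)

lemma Bd_le {S : Finset σ} {p : ℕ} {N : Submodule R (ExteriorAlgebra R G)}
    (h : ∀ i ∈ S, ∀ y ∈ ⋀[R]^(p + 1) G, con (r i) y ∈ N) : Bd r S p ≤ N := by
  refine iSup₂_le fun i hi => ?_
  rintro _ ⟨y, hy, rfl⟩
  exact h i hi y hy

lemma Bd_mono {S T : Finset σ} (h : S ⊆ T) (p : ℕ) : Bd r S p ≤ Bd r T p :=
  Bd_le r fun _ hi _ hy => con_mem_Bd r (h hi) hy

lemma Bd_insert (a : σ) (S : Finset σ) (p : ℕ) :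
    Bd r (insert a S) p = (⋀[R]^(p + 1) G).map (con (r a)) ⊔ Bd r S p := by
  unfold Bd
  rw [Finset.iSup_insert]

lemma con_Bd (a : σ) (S : Finset σ) (p : ℕ) :
    Bd r (insert a S) (p + 1) ≤ (Bd r S p).comap (con (r a)) := by
  refine Bd_le r fun i hi y hy => ?_
  rw [Submodule.mem_comap]
  rcases Finset.mem_insert.mp hi with rfl | hi
  · rw [con_con]; exact zero_mem _
  · rw [con_comm]
    exact neg_mem (con_mem_Bd r hi (con_mem _ _ _ hy))

lemma ι_mul_Bd (S : Finset σ) (p : ℕ) (g : G) (hg : ∀ i ∈ S, r i g = 0) :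
    Bd r S p ≤ (Bd r S (p + 1)).comap (LinearMap.mulLeft R (ExteriorAlgebra.ι R g)) := by
  refine Bd_le r fun i hi y hy => ?_
  rw [Submodule.mem_comap, LinearMap.mulLeft_apply]
  have h := con_ι_mul (r i) g y
  rw [hg i hi, zero_smul, zero_sub] at h
  rw [← neg_eq_iff_eq_neg] at h
  rw [← h]
  exact neg_mem (con_mem_Bd r hi (ι_mul_mem g hy))

lemma smul_mem_Bd (a : σ) (S : Finset σ) (p : ℕ) (g : G) (Δ : R) (hg : ∀ i ∈ S, r i g = 0)
    (hga : r a g = Δ) (x : ExteriorAlgebra R G) (hx : x ∈ ⋀[R]^(p + 1) G)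
    (hc : con (r a) x ∈ Bd r S p) : Δ • x ∈ Bd r (insert a S) (p + 1) := by
  have h := con_ι_mul (r a) g x
  rw [hga] at h
  have h2 : Δ • x = con (r a) (ExteriorAlgebra.ι R g * x)
      + ExteriorAlgebra.ι R g * con (r a) x := by rw [h]; abel
  rw [h2]
  refine add_mem (con_mem_Bd r (Finset.mem_insert_self a S) (ι_mul_mem g hx)) ?_
  exact Bd_mono r (Finset.subset_insert a S) _ (ι_mul_Bd r S p g hg hc)

/-- Injectivity up to torsion of the iterated contraction. -/
lemma pow_smul_mem_Bd (Δ : R) (g : σ → G) (hg : ∀ a i, r i (g a) = if i = a then Δ else 0) :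
    ∀ (L : List σ), L.Nodup → ∀ (S : Finset σ), (∀ a ∈ L, a ∉ S) → ∀ (p : ℕ)
      (x : ExteriorAlgebra R G), x ∈ ⋀[R]^(p + L.length) G → conL (L.map r) x ∈ Bd r S p →
      Δ ^ L.length • x ∈ Bd r (S ∪ L.toFinset) (p + L.length) := by
  intro L
  induction L with
  | nil =>
    intro _ S _ p x _ hx
    simpa [conL_nil] using hx
  | cons a L ih =>
    intro hL S hS p x hx hc
    rw [List.nodup_cons] at hL
    rw [List.map_cons, conL_cons] at hc
    have h1 := ih hL.2 S (fun b hb => hS b (List.mem_cons_of_mem _ hb)) p (con (r a) x)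
      (con_mem _ _ _ hx) hc
    rw [← map_smul] at h1
    have h2 := smul_mem_Bd r a (S ∪ L.toFinset) (p + L.length) (g a) Δ (by
      intro i hi
      rw [hg, if_neg]
      rintro rfl
      rcases Finset.mem_union.mp hi with h | h
      · exact hS i List.mem_cons_self h
      · exact hL.1 (List.mem_toFinset.mp h)) (by rw [hg, if_pos rfl]) _
      (Submodule.smul_mem _ _ hx) h1
    rw [smul_smul, ← pow_succ'] at h2
    rw [List.toFinset_cons, Finset.union_insert]
    exact h2

/-- The quotient of the exterior power by the boundaries. -/
abbrev Uq (S : Finset σ) (p : ℕ) : Type := ↥(⋀[R]^p G) ⧸ (Bd r S p).submoduleOf (⋀[R]^p G)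

/-- contraction by `r a` as a map between exterior powers -/
def conR (a : σ) (p : ℕ) : ↥(⋀[R]^(p + 1) G) →ₗ[R] ↥(⋀[R]^p G) :=
  (con (r a)).restrict (con_mem (r a) p)

/-- The induced left map of the short exact sequence. -/
def Uf (a : σ) (S : Finset σ) (p : ℕ) : Uq r (insert a S) (p + 1) →ₗ[R] Uq r S p :=
  Submodule.mapQ _ _ (conR r a p) (fun x hx => con_Bd r a S p hx)

/-- The right map of the short exact sequence. -/
def Ug (a : σ) (S : Finset σ) (p : ℕ) : Uq r S p →ₗ[R] Uq r (insert a S) p :=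
  Submodule.mapQ _ _ LinearMap.id (fun _ hx => Bd_mono r (Finset.subset_insert a S) p hx)

lemma Ug_surj (a : σ) (S : Finset σ) (p : ℕ) : Function.Surjective (Ug r a S p) := by
  intro x
  obtain ⟨x, rfl⟩ := Submodule.mkQ_surjective _ x
  exact ⟨Submodule.Quotient.mk x, rfl⟩

lemma Uf_exact (a : σ) (S : Finset σ) (p : ℕ) : Function.Exact (Uf r a S p) (Ug r a S p) := by
  intro x
  obtain ⟨x, rfl⟩ := Submodule.mkQ_surjective _ x
  constructor
  · intro h
    have h1 : (Submodule.Quotient.mk x : Uq r (insert a S) p) = 0 := h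
    rw [Submodule.Quotient.mk_eq_zero] at h1
    have h2 : (x : ExteriorAlgebra R G) ∈ Bd r (insert a S) p := h1
    rw [Bd_insert] at h2
    obtain ⟨_, ⟨y, hy, rfl⟩, b, hb, hyb⟩ := Submodule.mem_sup.mp h2
    refine ⟨Submodule.Quotient.mk ⟨y, hy⟩, ?_⟩
    change (Submodule.Quotient.mk (conR r a p ⟨y, hy⟩) : Uq r S p) = Submodule.Quotient.mk x
    rw [Submodule.Quotient.eq]
    change con (r a) y - (x : ExteriorAlgebra R G) ∈ Bd r S p
    rw [← hyb]
    simpa using hb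
  · rintro ⟨y, hy⟩
    obtain ⟨y, rfl⟩ := Submodule.mkQ_surjective _ y
    rw [← hy]
    change (Submodule.Quotient.mk (conR r a p y) : Uq r (insert a S) p) = 0
    rw [Submodule.Quotient.mk_eq_zero]
    exact con_mem_Bd r (Finset.mem_insert_self a S) y.2

lemma smul_eq_zero_of_Uf (a : σ) (S : Finset σ) (p : ℕ) (g : G) (Δ : R)
    (hg : ∀ i ∈ S, r i g = 0) (hga : r a g = Δ) (x : Uq r (insert a S) (p + 1))
    (hx : Uf r a S p x = 0) : Δ • x = 0 := by
  obtain ⟨x, rfl⟩ := Submodule.mkQ_surjective _ x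
  have h1 : (Submodule.Quotient.mk (conR r a p x) : Uq r S p) = 0 := hx
  rw [Submodule.Quotient.mk_eq_zero] at h1
  rw [← map_smul]
  change (Submodule.Quotient.mk (Δ • x) : Uq r (insert a S) (p + 1)) = 0
  rw [Submodule.Quotient.mk_eq_zero]
  exact smul_mem_Bd r a S p g Δ hg hga x x.2 h1

end Boundaries
end ExtPart

section KerPart
variable {n m : ℕ} {κ : Type} [Fintype κ] [LinearOrder κ] (M : Matrix (Fin m) κ (Rp n))

/-- The rows of a matrix as linear forms. -/
def rowF (i : Fin m) : Module.Dual (Rp n) (κ → Rp n) := LinearMap.proj i ∘ₗ M.mulVecLin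

lemma rowF_apply (i : Fin m) (v : κ → Rp n) : rowF M i v = ∑ c, M i c * v c := rfl

lemma rowF_single (i : Fin m) (c : κ) : rowF M i (Pi.single c 1) = M i c := by
  rw [rowF_apply]
  simp [Pi.single_apply]

/-- Vectors on which all the rows but one vanish. -/
def gvec (C : Fin m → κ) (a : Fin m) : κ → Rp n :=
  ∑ j, (M.submatrix id C).adjugate j a • Pi.single (C j) 1

lemma rowF_gvec (C : Fin m → κ) (a i : Fin m) :
    rowF M i (gvec M C a) = if i = a then (M.submatrix id C).det else 0 := by
  have h := congrFun (congrFun (Matrix.mul_adjugate (M.submatrix id C)) i) a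
  rw [Matrix.mul_apply] at h
  unfold gvec
  rw [map_sum]
  simp only [map_smul, rowF_single]
  rw [Matrix.smul_apply, Matrix.one_apply] at h
  simpa [mul_comm] using h

lemma Uq_subsingleton (S : Finset (Fin m)) (p : ℕ) (hp : Fintype.card κ < p) :
    Subsingleton (Uq (rowF M) S p) := by
  have h1 : Module.finrank (Rp n) (⋀[Rp n]^p (κ → Rp n)) = 0 := by
    rw [exteriorPower.finrank_eq, Module.finrank_fintype_fun_eq_card]
    exact Nat.choose_eq_zero_of_lt hp
  have h2 : Subsingleton (⋀[Rp n]^p (κ → Rp n)) :=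
    (Module.finrank_eq_zero_iff_of_free (Rp n) _).mp h1
  exact (Submodule.mkQ_surjective _).subsingleton

lemma Bd_empty (p : ℕ) : Bd (rowF M) ∅ p = ⊥ := by
  unfold Bd
  simp

/-- The depth of the boundary quotients. -/
lemma depth_Uq (hcard : Fintype.card κ + 1 ≤ m + n) (hn : 1 ≤ n)
    (hX : ∀ j, (X j : Rp n) ∈
      (Ideal.span (Set.range fun C : Fin m → κ => (M.submatrix id C).det)).radical) :
    ∀ k p : ℕ, Fintype.card κ < p + k → ∀ (S : Finset (Fin m)) (t : ℕ), t ≤ n → t + m ≤ p + 1 →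
      DepthGE n t (Uq (rowF M) S p) := by
  intro k
  induction k with
  | zero =>
    intro p hp S t _ _
    have := Uq_subsingleton M S p (by omega)
    exact DepthGE.of_subsingleton n t
  | succ k ih =>
    intro p hp S
    induction S using Finset.induction_on with
    | empty =>
      intro t ht _
      refine DepthGE.mono ?_ ht
      have hb : (Bd (rowF M) ∅ p).submoduleOf (⋀[Rp n]^p (κ → Rp n)) = ⊥ := by
        rw [Bd_empty, Submodule.submoduleOf, Submodule.comap_bot, Submodule.ker_subtype]
      have e := Submodule.quotEquivOfEqBot _ hb
      have : Module.Free (Rp n) (Uq (rowF M) ∅ p) := Module.Free.of_equiv e.symm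
      have : Module.Finite (Rp n) (Uq (rowF M) ∅ p) := inferInstance
      exact DepthGE.of_free n
    | insert a S haS ihS =>
      intro t ht htp
      refine DepthGE.of_ses (Uf (rowF M) a S p) (Ug (rowF M) a S p) ?_ (Ug_surj _ a S p)
        (Uf_exact _ a S p) ?_ (ihS t ht htp)
      · rw [injective_iff_map_eq_zero]
        intro x hx
        refine DepthGE.torsion_free' (ih (p + 1) (by omega) (insert a S) 1 hn (by omega)) _ hX x 1 ?_
        rintro _ ⟨C, rfl⟩
        rw [pow_one]
        refine smul_eq_zero_of_Uf (rowF M) a S p (gvec M C a) _ ?_ ?_ x hx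
        · intro i hi
          rw [rowF_gvec, if_neg]
          rintro rfl
          exact haS hi
        · rw [rowF_gvec, if_pos rfl]
      · by_cases h : t + 1 ≤ n
        · exact ih (p + 1) (by omega) _ _ h (by omega)
        · have := Uq_subsingleton M (insert a S) (p + 1) (by omega)
          exact DepthGE.of_subsingleton n _

/-- The circuit vector of a general matrix. -/
def circG (T : Finset κ) (hT : T.card = m + 1) : κ → Rp n := fun c =>
  ∑ k : Fin (m + 1),
    if c = T.orderEmbOfFin hT k then
      (-1 : Rp n) ^ (k : ℕ) * (M.submatrix id fun l : Fin m => T.orderEmbOfFin hT (k.succAbove l)).det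
    else 0

/-- The iterated contraction by all the rows, as a map to the free module. -/
def psi : ExteriorAlgebra (Rp n) (κ → Rp n) →ₗ[Rp n] (κ → Rp n) :=
  ExteriorAlgebra.ιInv ∘ₗ conL (List.ofFn (rowF M))

lemma ι_psi (x : ExteriorAlgebra (Rp n) (κ → Rp n)) (hx : x ∈ ⋀[Rp n]^(m + 1) (κ → Rp n)) :
    ExteriorAlgebra.ι (Rp n) (psi M x) = conL (List.ofFn (rowF M)) x := by
  have h : conL (List.ofFn (rowF M)) x ∈ ⋀[Rp n]^1 (κ → Rp n) := by
    refine conL_mem _ 1 x ?_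
    rw [List.length_ofFn, add_comm]
    exact hx
  rw [ExteriorAlgebra.exteriorPower, pow_one] at h
  obtain ⟨g, hg⟩ := h
  unfold psi
  rw [LinearMap.comp_apply, ← hg, ExteriorAlgebra.ι_leftInverse]

lemma psi_ιMulti (v : Fin (m + 1) → κ → Rp n) (c : κ) :
    psi M (ExteriorAlgebra.ιMulti (Rp n) (m + 1) v) c =
      (Matrix.of fun i j => (Fin.snoc (rowF M) (LinearMap.proj c) :
        Fin (m + 1) → Module.Dual (Rp n) (κ → Rp n)) i (v j)).det := by
  have h1 := ι_psi M (ExteriorAlgebra.ιMulti (Rp n) (m + 1) v)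
    (ExteriorAlgebra.ιMulti_range (Rp n) (m + 1) ⟨v, rfl⟩)
  have h2 := conL_ιMulti (m + 1) (Fin.snoc (rowF M) (LinearMap.proj c) :
        Fin (m + 1) → Module.Dual (Rp n) (κ → Rp n)) v
  rw [List.ofFn_succ', conL_concat] at h2
  simp only [Fin.snoc_castSucc, Fin.snoc_last] at h2
  rw [← h1, con_ι] at h2
  exact (ExteriorAlgebra.algebraMap_inj (κ → Rp n) _ _).mp h2

lemma psi_circ (T : Finset κ) (hT : T.card = m + 1) :
    psi M (ExteriorAlgebra.ιMulti (Rp n) (m + 1)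
      ((fun c => Pi.single c 1) ∘ T.orderEmbOfFin hT)) = (-1 : Rp n) ^ m • circG M T hT := by
  funext c
  rw [psi_ιMulti, Matrix.det_succ_row _ (Fin.last m), Pi.smul_apply, circG, Finset.smul_sum]
  refine Finset.sum_congr rfl fun k _ => ?_
  simp only [Matrix.of_apply, Fin.snoc_last, Function.comp_apply, LinearMap.proj_apply,
    Pi.single_apply, Fin.val_last]
  split_ifs with h
  · rw [pow_add, mul_one, smul_eq_mul, mul_assoc]
    congr 3
    ext i j
    simp [rowF_single, Fin.succAbove_last]
  · simp

lemma psi_smul (C : Fin m → κ) (w : κ → Rp n) (hw : M.mulVec w = 0) :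
    psi M (ExteriorAlgebra.ιMulti (Rp n) (m + 1)
      (Fin.snoc (fun i => Pi.single (C i) 1) w : Fin (m + 1) → κ → Rp n)) =
      (M.submatrix id C).det • w := by
  funext c
  rw [psi_ιMulti, Matrix.det_succ_column _ (Fin.last m), Fin.sum_univ_castSucc,
    Finset.sum_eq_zero]
  · simp only [Matrix.of_apply, Fin.snoc_last, LinearMap.proj_apply, Fin.val_last, zero_add,
      Pi.smul_apply, smul_eq_mul]
    rw [Even.neg_one_pow ⟨m, rfl⟩, one_mul, mul_comm]
    congr 2
    ext i j
    simp [rowF_single, Fin.succAbove_last]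
  · intro i _
    have : rowF M i w = 0 := congrFun hw i
    simp [this]

lemma psi_mem_span (x : ExteriorAlgebra (Rp n) (κ → Rp n))
    (hx : x ∈ ⋀[Rp n]^(m + 1) (κ → Rp n)) :
    psi M x ∈ Submodule.span (Rp n) {v | ∃ T : Finset κ, ∃ hT : T.card = m + 1, v = circG M T hT} := by
  have hs : Submodule.span (Rp n) (Set.range fun c : κ => (Pi.single c 1 : κ → Rp n)) = ⊤ := by
    have := (Pi.basisFun (Rp n) κ).span_eq
    convert this using 3
    ext c : 1
    simp
  rw [← exteriorPower.ιMulti_family_span_fixedDegree_of_span (Rp n) hs] at hx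
  induction hx using Submodule.span_induction with
  | mem x hx =>
    obtain ⟨s, rfl⟩ := hx
    have h := psi_circ M s.1 s.2
    change psi M (ExteriorAlgebra.ιMulti (Rp n) (m + 1)
      ((fun c => Pi.single c 1) ∘ s.1.orderEmbOfFin s.2)) ∈ _
    rw [h]
    exact Submodule.smul_mem _ _ (Submodule.subset_span ⟨s.1, s.2, rfl⟩)
  | zero => rw [map_zero]; exact zero_mem _
  | add x y _ _ hx hy => rw [map_add]; exact add_mem hx hy
  | smul a x _ hx => rw [map_smul]; exact Submodule.smul_mem _ _ hx

lemma psi_Bd (x : ExteriorAlgebra (Rp n) (κ → Rp n)) (hx : x ∈ Bd (rowF M) Finset.univ (m + 1)) :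
    psi M x = 0 := by
  have : Bd (rowF M) Finset.univ (m + 1) ≤ LinearMap.ker (psi M) := by
    refine Bd_le _ fun i _ y _ => ?_
    rw [LinearMap.mem_ker]
    unfold psi
    rw [LinearMap.comp_apply, conL_con_of_mem _ _ (by simp), map_zero]
  exact this hx

lemma psi_inj_tors (C : Fin m → κ) (x : ExteriorAlgebra (Rp n) (κ → Rp n))
    (hx : x ∈ ⋀[Rp n]^(m + 1) (κ → Rp n)) (h0 : psi M x = 0) :
    (M.submatrix id C).det ^ m • x ∈ Bd (rowF M) Finset.univ (m + 1) := by
  have h1 := ι_psi M x hx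
  rw [h0, map_zero] at h1
  have h2 := pow_smul_mem_Bd (rowF M) (M.submatrix id C).det (gvec M C)
    (fun a i => rowF_gvec M C a i) (List.finRange m) (List.nodup_finRange m) ∅ (by simp) 1 x
    (by rw [List.length_finRange, add_comm]; exact hx)
    (by rw [← List.ofFn_eq_map, ← h1]; exact zero_mem _)
  rw [List.length_finRange, add_comm 1 m] at h2
  exact Bd_mono _ (Finset.subset_univ _) _ h2

/-- The induced map from the quotient. -/
def psiQ : Uq (rowF M) Finset.univ (m + 1) →ₗ[Rp n] (κ → Rp n) :=
  Submodule.liftQ _ (psi M ∘ₗ (⋀[Rp n]^(m + 1) (κ → Rp n)).subtype)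
    (fun x hx => psi_Bd M x hx)

/-- The kernel of the matrix is generated by the circuits. -/
theorem ker_le_span_circuits (hcard : Fintype.card κ + 1 ≤ m + n) (hn : 2 ≤ n)
    (hX : ∀ j, (X j : Rp n) ∈
      (Ideal.span (Set.range fun C : Fin m → κ => (M.submatrix id C).det)).radical)
    (w : κ → Rp n) (hw : M.mulVec w = 0) :
    w ∈ Submodule.span (Rp n) {v | ∃ T : Finset κ, ∃ hT : T.card = m + 1, v = circG M T hT} := by
  have hD : ∀ t, t ≤ 2 → DepthGE n t (Uq (rowF M) Finset.univ (m + 1)) := fun t ht =>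
    depth_Uq M hcard (by omega) hX (Fintype.card κ) (m + 1) (by omega) _ t (by omega) (by omega)
  have hinj : Function.Injective (psiQ M) := by
    rw [injective_iff_map_eq_zero]
    intro x hx
    refine DepthGE.torsion_free' (hD 1 (by omega)) _ hX x m ?_
    rintro _ ⟨C, rfl⟩
    obtain ⟨x, rfl⟩ := Submodule.mkQ_surjective _ x
    have h0 : psi M x.1 = 0 := hx
    have h1 := psi_inj_tors M C x.1 x.2 h0
    rw [← map_smul]
    exact (Submodule.Quotient.mk_eq_zero _).mpr h1
  have hC : DepthGE n 1 ((κ → Rp n) ⧸ LinearMap.range (psiQ M)) :=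
    DepthGE.of_ses (psiQ M) (LinearMap.range (psiQ M)).mkQ hinj (Submodule.mkQ_surjective _)
      (LinearMap.exact_map_mkQ_range _) (hD 2 le_rfl) ((DepthGE.of_free n).mono (by omega))
  have hw0 : (LinearMap.range (psiQ M)).mkQ w = 0 := by
    refine DepthGE.torsion_free' hC _ hX _ 1 ?_
    rintro _ ⟨C, rfl⟩
    rw [pow_one, ← map_smul]
    refine (Submodule.Quotient.mk_eq_zero _).mpr ?_
    change (M.submatrix id C).det • w ∈ _
    rw [← psi_smul M C w hw]
    exact ⟨Submodule.Quotient.mk ⟨_, ExteriorAlgebra.ιMulti_range (Rp n) (m + 1) ⟨_, rfl⟩⟩, rfl⟩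
  obtain ⟨y, rfl⟩ := (Submodule.Quotient.mk_eq_zero _).mp hw0
  obtain ⟨y, rfl⟩ := Submodule.mkQ_surjective _ y
  exact psi_mem_span M y.1 y.2

end KerPart

section GeomPart

lemma det_mul_eq_zero_of_minors {m : ℕ} {κ : Type} [Fintype κ] [DecidableEq κ]
    (A : Matrix (Fin m) κ ℂ) (B : Matrix κ (Fin m) ℂ)
    (h : ∀ C : Fin m → κ, (A.submatrix id C).det = 0) : (A * B).det = 0 := by
  rw [← Matrix.det_transpose]
  have h1 : (A * B).transpose = fun j : Fin m => ∑ c : κ, B c j • fun i => A i c := by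
    funext j i
    rw [Matrix.transpose_apply, Matrix.mul_apply, Finset.sum_apply]
    exact Finset.sum_congr rfl fun c _ => mul_comm _ _
  change Matrix.detRowAlternating (A * B).transpose = 0
  rw [h1]
  change Matrix.detRowAlternating.toMultilinearMap _ = 0
  rw [MultilinearMap.map_sum]
  refine Finset.sum_eq_zero fun C _ => ?_
  rw [MultilinearMap.map_smul_univ]
  have h2 : Matrix.detRowAlternating.toMultilinearMap (fun (j : Fin m) (i : Fin m) => A i (C j)) =
      (A.submatrix id C).det := by
    rw [← Matrix.det_transpose (A.submatrix id C)]
    rfl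
  rw [h2, h C, smul_zero]

lemma exists_minor_ne_zero {m : ℕ} {κ : Type} [Fintype κ] [DecidableEq κ]
    (A : Matrix (Fin m) κ ℂ) (hA : ∀ y : Fin m → ℂ, A.transpose.mulVec y = 0 → y = 0) :
    ∃ C : Fin m → κ, (A.submatrix id C).det ≠ 0 := by
  by_contra! hcon
  have hker : LinearMap.ker (Matrix.toLin' A.transpose) = ⊥ := by
    rw [LinearMap.ker_eq_bot']
    intro y hy
    exact hA y (by simpa using hy)
  obtain ⟨g, hg⟩ := LinearMap.exists_leftInverse_of_injective _ hker
  have h1 : LinearMap.toMatrix' g * A.transpose = 1 := by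
    have := congrArg LinearMap.toMatrix' hg
    rwa [LinearMap.toMatrix'_comp, LinearMap.toMatrix'_toLin', LinearMap.toMatrix'_id] at this
  have h2 : A * (LinearMap.toMatrix' g).transpose = 1 := by
    have := congrArg Matrix.transpose h1
    rwa [Matrix.transpose_mul, Matrix.transpose_transpose, Matrix.transpose_one] at this
  have h3 := det_mul_eq_zero_of_minors A (LinearMap.toMatrix' g).transpose hcon
  rw [h2, Matrix.det_one] at h3
  exact one_ne_zero h3

lemma eq_zero_of_rank {ι κ : Type} [Fintype ι] [Fintype κ] (A : Matrix ι κ ℂ)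
    (h : A.rank = Fintype.card κ) (v : κ → ℂ) (hv : A.mulVec v = 0) : v = 0 := by
  have h1 := LinearMap.finrank_range_add_finrank_ker A.mulVecLin
  rw [Module.finrank_fintype_fun_eq_card] at h1
  have h2 : Module.finrank ℂ (LinearMap.range A.mulVecLin) = Fintype.card κ := h
  have h3 : Module.finrank ℂ (LinearMap.ker A.mulVecLin) = 0 := by omega
  rw [Submodule.finrank_eq_zero, LinearMap.ker_eq_bot'] at h3
  exact h3 v hv

lemma euler_eval {n d : ℕ} {g : Rp n} (hg : g.IsHomogeneous d) (p : Fin n → ℂ) :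
    ∑ j, eval p (pderiv j g) * p j = d * eval p g := by
  have h := congrArg (eval p) hg.sum_X_mul_pderiv
  simpa [mul_comm] using h

/-- At a point away from the origin, the matrix `Q_{∖1}` has full rank. -/
lemma Q1_rows_indep (n m : ℕ) (f : Fin m → Rp n) (d : Fin m → ℕ)
    (hfh : ∀ i, (f i).IsHomogeneous (d i)) (hd2 : ∀ i, 2 ≤ d i) (hsnc : SNC n m f)
    (p : Fin n → ℂ) (hp : p ≠ 0) (y : Fin m → ℂ)
    (hy : ((Q1 n m f).map (eval p)).transpose.mulVec y = 0) : y = 0 := by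
  have hJ : ∀ j, ∑ i, eval p (pderiv j (f i)) * y i = 0 := fun j => congrFun hy (Sum.inr j)
  have hD : ∀ k : Fin m, (k : ℕ) ≠ 0 → eval p (f k) * y k = 0 := by
    intro k hk
    have h := congrFun hy (Sum.inl ⟨k, hk⟩)
    simp only [Matrix.mulVec, dotProduct, Matrix.transpose_apply, Matrix.map_apply, Q1,
      Matrix.of_apply, Sum.elim_inl, Pi.zero_apply] at h
    rw [Finset.sum_eq_single k] at h
    · simpa using h
    · intro b _ hb
      rw [if_neg hb, map_zero, zero_mul]
    · simp
  have hE : ∑ i, (d i : ℂ) * eval p (f i) * y i = 0 := by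
    simp_rw [← euler_eval (hfh _) p, Finset.sum_mul]
    rw [Finset.sum_comm]
    refine Finset.sum_eq_zero fun j _ => ?_
    have h := congrArg (fun z => z * p j) (hJ j)
    simp only [Finset.sum_mul, zero_mul] at h
    rw [← h]
    exact Finset.sum_congr rfl fun i _ => by ring
  have hall : ∀ k : Fin m, eval p (f k) * y k = 0 := by
    intro k
    by_cases hk : (k : ℕ) = 0
    · rw [Finset.sum_eq_single k] at hE
      · have hdk : (d k : ℂ) ≠ 0 := by
          have := hd2 k
          exact_mod_cast (by omega : d k ≠ 0)
        rw [mul_assoc] at hE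
        exact (mul_eq_zero.mp hE).resolve_left hdk
      · intro b _ hb
        rw [mul_assoc, hD b, mul_zero]
        intro hb0
        exact hb (Fin.ext (hb0.trans hk.symm))
      · simp
    · exact hD k hk
  classical
  set I : Finset (Fin m) := Finset.univ.filter fun i => eval p (f i) = 0 with hI
  have hIf : ∀ i ∈ I, eval p (f i) = 0 := fun i hi => (Finset.mem_filter.mp hi).2
  have hoff : ∀ i, i ∉ I → y i = 0 := by
    intro i hi
    refine (mul_eq_zero.mp (hall i)).resolve_left fun h => hi ?_
    simp [hI, h]
  have hn1 : 1 ≤ n := by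
    rcases Nat.eq_zero_or_pos n with rfl | h
    · exact absurd (Subsingleton.elim p 0) hp
    · exact h
  by_cases hcard : n ≤ I.card
  · exfalso
    obtain ⟨J, hJI, hJn⟩ := Finset.exists_subset_card_eq hcard
    have hr := hsnc.2 J (by omega) (by omega) p hp fun i hi => hIf i (hJI hi)
    refine hp (eq_zero_of_rank _ (by rw [hr, hJn, Fintype.card_fin]) p ?_)
    funext i
    have h := euler_eval (hfh i.1) p
    rw [hIf i.1 (hJI i.2), mul_zero] at h
    exact h
  · rcases Finset.eq_empty_or_nonempty I with hI0 | hI0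
    · funext i
      exact hoff i (by rw [hI0]; simp)
    · have hr := hsnc.2 I (Finset.card_pos.mpr hI0) (by omega) p hp hIf
      rw [← Matrix.rank_transpose] at hr
      have h0 := eq_zero_of_rank _ (by rw [hr, Fintype.card_coe]) (fun i : I => y i.1) (by
        funext j
        change ∑ i : I, eval p (pderiv j (f i.1)) * y i.1 = 0
        rw [Finset.sum_coe_sort I (fun i => eval p (pderiv j (f i)) * y i), ← hJ j]
        refine Finset.sum_subset (Finset.subset_univ _) fun i _ hi => ?_
        rw [hoff i hi, mul_zero])
      funext i
      by_cases hi : i ∈ I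
      · exact congrFun h0 ⟨i, hi⟩
      · exact hoff i hi

lemma X_mem_radical (n m : ℕ) (f : Fin m → Rp n) (d : Fin m → ℕ)
    (hfh : ∀ i, (f i).IsHomogeneous (d i)) (hd2 : ∀ i, 2 ≤ d i) (hsnc : SNC n m f) (j : Fin n) :
    (X j : Rp n) ∈ (Ideal.span (Set.range fun C : Fin m → Col n m =>
      ((Q1 n m f).submatrix id C).det)).radical := by
  rw [← vanishingIdeal_zeroLocus_eq_radical (K := ℂ), mem_vanishingIdeal_iff]
  intro p hp
  rw [mem_zeroLocus_iff] at hp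
  rw [aeval_X]
  by_contra hpj
  have hp0 : p ≠ 0 := fun h => hpj (congrFun h j)
  obtain ⟨C, hC⟩ := exists_minor_ne_zero ((Q1 n m f).map (eval p))
    (Q1_rows_indep n m f d hfh hd2 hsnc p hp0)
  refine hC ?_
  have h := hp _ (Ideal.subset_span ⟨C, rfl⟩)
  rw [AlgHom.map_det] at h
  exact h

end GeomPart

section FinalPart

lemma mulVec_circG {n m : ℕ} {κ : Type} [Fintype κ] [LinearOrder κ] (M : Matrix (Fin m) κ (Rp n))
    (T : Finset κ) (hT : T.card = m + 1) : M.mulVec (circG M T hT) = 0 := by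
  funext i
  change rowF M i (circG M T hT) = 0
  have h1 := psi_circ M T hT
  have h2 := ι_psi M (ExteriorAlgebra.ιMulti (Rp n) (m + 1)
      ((fun c => Pi.single c 1) ∘ T.orderEmbOfFin hT))
      (ExteriorAlgebra.ιMulti_range (Rp n) (m + 1) ⟨_, rfl⟩)
  rw [h1] at h2
  have h3 := con_conL (rowF M i) (List.ofFn (rowF M)) (ExteriorAlgebra.ιMulti (Rp n) (m + 1)
      ((fun c => Pi.single c 1) ∘ T.orderEmbOfFin hT))
  rw [conL_con_of_mem _ _ (by simp), ← h2, con_ι, List.length_ofFn, map_smul, Algebra.smul_def,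
    ← map_mul] at h3
  have h4 := (ExteriorAlgebra.algebraMap_inj (κ → Rp n) (0 : Rp n) _).mp ((map_zero _).trans h3)
  rw [smul_eq_mul, ← mul_assoc, ← mul_pow] at h4
  simpa using h4.symm

lemma circuit_eq (n m : ℕ) (f : Fin m → Rp n) (T : Finset (Col n m)) (hT : T.card = m + 1) :
    circuit n m f T hT = circG (Q1 n m f) T hT := by
  funext c
  unfold circuit circG
  refine Finset.sum_congr rfl fun k _ => ?_
  congr

lemma Q1_mulVec (n m : ℕ) (f : Fin m → Rp n) (v : Col n m → Rp n) (i : Fin m) :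
    (Q1 n m f).mulVec v i =
      f i * (if h : (i : ℕ) ≠ 0 then v (Sum.inl ⟨i, h⟩) else 0) +
        ∑ j, v (Sum.inr j) * pderiv j (f i) := by
  simp only [Matrix.mulVec, dotProduct, Q1, Matrix.of_apply, Fintype.sum_sum_type, Sum.elim_inl,
    Sum.elim_inr]
  congr 1
  · split_ifs with h
    · rw [Finset.sum_eq_single ⟨i, h⟩]
      · simp
      · intro b _ hb
        rw [if_neg, zero_mul]
        intro hib
        exact hb (Subtype.ext hib.symm)
      · simp
    · rw [mul_zero]
      refine Finset.sum_eq_zero fun b _ => ?_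
      rw [if_neg, zero_mul]
      rintro rfl
      exact h b.2
  · exact Finset.sum_congr rfl fun j _ => mul_comm _ _

end FinalPart

/-- If moreover all `d_i ≥ 2`, the module `Der(A)` of tangent derivations is
generated by the Euler vector `(x_1,…,x_n)` and the projections `π(c_T)` of the circuit
vectors onto the last `n` coordinates. -/
theorem der_generated_by_euler_and_circuits (n m : ℕ) (hn : 2 ≤ n) (hm : n + 1 ≤ m)
    (f : Fin m → Rp n) (d : Fin m → ℕ)
    (hf0 : ∀ i, f i ≠ 0) (hfh : ∀ i, (f i).IsHomogeneous (d i)) (hd2 : ∀ i, 2 ≤ d i)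
    (hsnc : SNC n m f) :
    ∀ θ : Fin n → Rp n,
      (∀ i, f i ∣ ∑ j, θ j * pderiv j (f i)) ↔
        θ ∈ Submodule.span (Rp n)
          (insert (fun j : Fin n => (X j : Rp n))
            {v | ∃ T : Finset (Col n m), ∃ hT : T.card = m + 1,
              v = fun j : Fin n => circuit n m f T hT (Sum.inr j)}) := by
  intro θ
  have hEul : ∀ i, ∑ j, (X j : Rp n) * pderiv j (f i) = (d i : Rp n) * f i := by
    intro i
    have h := (hfh i).sum_X_mul_pderiv
    rw [h, nsmul_eq_mul]
  constructor
  · intro hθ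
    choose a ha using hθ
    have hm0 : 0 < m := by omega
    set z : Fin m := ⟨0, hm0⟩ with hz
    set b : Rp n := C ((d z : ℂ)⁻¹) * a z with hb
    have hdz : (d z : Rp n) * C ((d z : ℂ)⁻¹) = 1 := by
      have h0 : (d z : ℂ) ≠ 0 := by
        have := hd2 z
        exact_mod_cast (by omega : d z ≠ 0)
      rw [← map_natCast (C : ℂ →+* Rp n), ← map_mul, mul_inv_cancel₀ h0, map_one]
    let w : Col n m → Rp n := Sum.elim (fun k => (d k.1 : Rp n) * b - a k.1)
      (fun j => θ j - b * X j)
    have hw : (Q1 n m f).mulVec w = 0 := by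
      funext i
      rw [Q1_mulVec]
      have h1 : ∑ j, w (Sum.inr j) * pderiv j (f i) = f i * a i - b * ((d i : Rp n) * f i) := by
        rw [← ha i, ← hEul i, Finset.mul_sum, ← Finset.sum_sub_distrib]
        refine Finset.sum_congr rfl fun j _ => ?_
        simp only [w, Sum.elim_inr]
        ring
      rw [h1, Pi.zero_apply]
      split_ifs with h
      · simp only [w, Sum.elim_inl]
        ring
      · have hi : i = z := Fin.ext (not_not.mp h)
        rw [hi, hb]
        linear_combination (-f z * a z) * hdz
    have hcard : Fintype.card (Col n m) + 1 ≤ m + n := by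
      rw [Fintype.card_sum, Fintype.card_fin]
      have h1 : Fintype.card {k : Fin m // (k : ℕ) ≠ 0} < Fintype.card (Fin m) :=
        Fintype.card_subtype_lt (x := z) (by simp [hz])
      rw [Fintype.card_fin] at h1
      omega
    have hspan := ker_le_span_circuits (Q1 n m f) hcard hn
      (X_mem_radical n m f d hfh hd2 hsnc) w hw
    have hproj := Submodule.mem_map_of_mem (f := LinearMap.funLeft (Rp n) (Rp n)
      (Sum.inr : Fin n → Col n m)) hspan
    rw [Submodule.map_span] at hproj
    have hθ : θ = b • (fun j : Fin n => (X j : Rp n)) +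
        LinearMap.funLeft (Rp n) (Rp n) (Sum.inr : Fin n → Col n m) w := by
      funext j
      simp [w, LinearMap.funLeft_apply]
    rw [hθ]
    refine add_mem (Submodule.smul_mem _ _ (Submodule.subset_span (Set.mem_insert _ _))) ?_
    refine Submodule.span_mono ?_ hproj
    rintro _ ⟨_, ⟨T, hT, rfl⟩, rfl⟩
    refine Set.mem_insert_of_mem _ ⟨T, hT, ?_⟩
    rw [circuit_eq]
    rfl
  · intro hθ i
    induction hθ using Submodule.span_induction with
    | mem v hv =>
      rcases hv with rfl | ⟨T, hT, rfl⟩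
      · rw [hEul i]
        exact dvd_mul_left _ _
      · have h := congrFun (mulVec_circG (Q1 n m f) T hT) i
        rw [← circuit_eq, Q1_mulVec, Pi.zero_apply] at h
        exact (dvd_add_right (dvd_mul_right _ _)).mp (h ▸ dvd_zero _)
    | zero => simp
    | add u v _ _ hu hv =>
      simp only [Pi.add_apply, add_mul, Finset.sum_add_distrib]
      exact dvd_add hu hv
    | smul r v _ hv =>
      simp only [Pi.smul_apply, smul_eq_mul, mul_assoc, ← Finset.mul_sum]
      exact dvd_mul_of_dvd_right hv _
end
end

section
/- Assume m ≥ n+1 and that f_1,…,f_m satisfy the SNC hypothesis. Let Der(A) = {θ ∈ R^n : f_i divides Σ_{j=1}^n θ_j·∂f_i/∂x_j in R, for all i} be the R-module of derivations tangent to the arrangement, let Ω¹ = Hom_R(Der(A), R) be its R-linear dual, and for p ≥ 0 let Ω^p = ⋀^p_R Ω¹ be the p-th exterior power. Then for every 0 ≤ p ≤ n, the R-module Ω^p has projective dimension at most p; that is, every SNC arrangement of hypersurfaces is tame. -/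
open MvPolynomial

noncomputable section

/-- The module `Der(A)` of derivations tangent to the arrangement. -/
def DerA (n m : ℕ) (f : Fin m → Rp n) : Submodule (Rp n) (Fin n → Rp n) where
  carrier := {θ | ∀ i, f i ∣ ∑ j, θ j * pderiv j (f i)}
  add_mem' := by
    intro a b ha hb i
    have h := dvd_add (ha i) (hb i)
    simpa [Pi.add_apply, add_mul, Finset.sum_add_distrib] using h
  zero_mem' := by
    intro i
    simp
  smul_mem' := by
    intro c a ha i
    have h := (ha i).mul_left c
    simpa [Pi.smul_apply, smul_eq_mul, Finset.mul_sum, mul_assoc] using h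

open CategoryTheory CategoryTheory.Limits in
/-- Splicing a projective resolution with a short exact sequence. -/
theorem splice_resolution {C : Type*} [Category C] [Abelian C]
    (S : ShortComplex C) (hS : S.ShortExact) (hP : Projective S.X₂)
    (Q : ProjectiveResolution S.X₁) :
    ∃ P : ProjectiveResolution S.X₃, ∀ k, Nonempty (P.complex.X (k+1) ≅ Q.complex.X k) := by
  have := hS.mono_f
  have := hS.epi_g
  obtain ⟨q, hq0, hqe, hqx⟩ : ∃ q : Q.complex.X 0 ⟶ S.X₁, ∃ h : Q.complex.d 1 0 ≫ q = 0,
      Epi q ∧ (ShortComplex.mk (Q.complex.d 1 0) q h).Exact :=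
    ⟨Q.π.f 0, Q.complex_d_comp_π_f_zero, inferInstanceAs (Epi (Q.π.f 0)), Q.exact₀⟩
  have w : Q.complex.d 1 0 ≫ (q ≫ S.f) = 0 := by
    rw [← Category.assoc, hq0, zero_comp]
  let K := ChainComplex.augment Q.complex (q ≫ S.f) w
  have hK0 : K.d 1 0 = q ≫ S.f := ChainComplex.augment_d_one_zero _ _ _
  have hw0 : (q ≫ S.f) ≫ S.g = 0 := by rw [Category.assoc, S.zero, comp_zero]
  have ex0 : (ShortComplex.mk (q ≫ S.f) S.g hw0).Exact := by
    let α : ShortComplex.mk (q ≫ S.f) S.g hw0 ⟶ S :=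
      { τ₁ := q
        τ₂ := 𝟙 _
        τ₃ := 𝟙 _ }
    have : Epi α.τ₁ := inferInstanceAs (Epi (q))
    have : IsIso α.τ₂ := inferInstanceAs (IsIso (𝟙 _))
    have : Mono α.τ₃ := inferInstanceAs (Mono (𝟙 _))
    rw [ShortComplex.exact_iff_of_epi_of_isIso_of_mono α]
    exact hS.exact
  have ex1 : (ShortComplex.mk (Q.complex.d 1 0) (q ≫ S.f) w).Exact := by
    let α : ShortComplex.mk (Q.complex.d 1 0) (q) hq0 ⟶
        ShortComplex.mk (Q.complex.d 1 0) (q ≫ S.f) w :=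
      { τ₁ := 𝟙 _
        τ₂ := 𝟙 _
        τ₃ := S.f }
    have : Epi α.τ₁ := inferInstanceAs (Epi (𝟙 _))
    have : IsIso α.τ₂ := inferInstanceAs (IsIso (𝟙 _))
    have : Mono α.τ₃ := inferInstanceAs (Mono S.f)
    rw [← ShortComplex.exact_iff_of_epi_of_isIso_of_mono α]
    exact hqx
  have hex : ∀ n, K.ExactAt (n+1) := by
    intro n
    rw [HomologicalComplex.exactAt_iff' _ (n + 1 + 1) (n + 1) n (by simp) (by simp)]
    cases n with
    | zero => exact ex1
    | succ n => exact Q.exact_succ n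
  refine ⟨{ complex := K
            projective := ?_
            π := (ChainComplex.toSingle₀Equiv _ _).symm ⟨S.g, ?_⟩
            quasiIso := ⟨fun n => ?_⟩ }, ?_⟩
  · intro n
    cases n with
    | zero => exact hP
    | succ n => exact Q.projective n
  · rw [hK0]; exact hw0
  · cases n with
    | zero =>
      rw [ChainComplex.quasiIsoAt₀_iff, ShortComplex.quasiIso_iff_of_zeros']
      · have hg : ((ChainComplex.toSingle₀Equiv K S.X₃).symm ⟨S.g, by rw [hK0]; exact hw0⟩).f 0
            = S.g := by
          exact ChainComplex.toSingle₀Equiv_symm_apply_f_zero _ _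
        refine (ShortComplex.exact_and_epi_g_iff_of_iso ?_).2
          ⟨ex0, by dsimp; infer_instance⟩
        exact ShortComplex.isoMk (Iso.refl _) (Iso.refl _) (Iso.refl _)
          ((Category.id_comp _).trans (hK0.symm.trans (Category.comp_id _).symm))
          ((Category.id_comp _).trans (Eq.trans hg.symm (Category.comp_id _).symm))
      all_goals rfl
    | succ n =>
      rw [quasiIsoAt_iff_exactAt']
      · exact hex n
      · apply ChainComplex.exactAt_succ_single_obj
  · intro k
    exact ⟨Iso.refl _⟩

open CategoryTheory CategoryTheory.Limits in
theorem exists_resolution {C : Type*} [Category C] [Abelian C] [EnoughProjectives C]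
    (p : ℕ) : ∀ (Z : C), HasProjectiveDimensionLT Z (p+1) →
    ∃ P : ProjectiveResolution Z, ∀ k : ℕ, p < k → IsZero (P.complex.X k) := by
  induction p with
  | zero =>
    intro Z hZ
    have : Projective Z := projective_iff_hasProjectiveDimensionLT_one.2 hZ
    refine ⟨ProjectiveResolution.self Z, ?_⟩
    intro k hk
    apply HomologicalComplex.isZero_single_obj_X
    simpa using hk.ne'
  | succ p ih =>
    intro Z hZ
    let S : ShortComplex C := ShortComplex.mk (kernel.ι (Projective.π Z)) (Projective.π Z) (by simp)
    have hS : S.ShortExact :=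
      { exact := ShortComplex.exact_kernel _
        mono_f := inferInstanceAs (Mono (kernel.ι _))
        epi_g := inferInstanceAs (Epi (Projective.π Z)) }
    have hP : Projective S.X₂ := inferInstanceAs (Projective (Projective.over Z))
    obtain ⟨Q, hQ⟩ := ih S.X₁ ((hS.hasProjectiveDimensionLT_X₃_iff p hP).1 hZ)
    obtain ⟨P, hP'⟩ := splice_resolution S hS hP Q
    refine ⟨P, fun k hk => ?_⟩
    obtain ⟨k, rfl⟩ : ∃ j, k = j + 1 := ⟨k-1, by omega⟩
    exact (hQ k (by omega)).of_iso (hP' k).some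

section ExteriorStep

variable {R : Type*} [CommRing R] {M M' : Type*} [AddCommGroup M] [Module R M]
  [AddCommGroup M'] [Module R M']

/-- Left multiplication by `v` on exterior powers. -/
def wedgeL (v : M) (p : ℕ) : ⋀[R]^p M →ₗ[R] ⋀[R]^(p+1) M :=
  LinearMap.restrict (LinearMap.mulLeft R (ExteriorAlgebra.ι R v)) (p := ⋀[R]^p M)
    (q := ⋀[R]^(p+1) M) (by
      intro x hx
      have h : ExteriorAlgebra.ι R v * x ∈
          LinearMap.range (ExteriorAlgebra.ι R : M →ₗ[R] ExteriorAlgebra R M) *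
          LinearMap.range (ExteriorAlgebra.ι R : M →ₗ[R] ExteriorAlgebra R M) ^ p :=
        Submodule.mul_mem_mul (LinearMap.mem_range_self _ _) hx
      rw [← pow_succ'] at h
      exact h)

theorem wedgeL_coe (v : M) (p : ℕ) (x : ⋀[R]^p M) :
    ((wedgeL v p x : ⋀[R]^(p+1) M) : ExteriorAlgebra R M) = ExteriorAlgebra.ι R v * x := rfl

theorem wedgeL_ιMulti (v : M) (p : ℕ) (m : Fin p → M) :
    wedgeL v p (exteriorPower.ιMulti R p m) = exteriorPower.ιMulti R (p+1) (Fin.cons v m) := by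
  apply Subtype.ext
  rw [wedgeL_coe, exteriorPower.ιMulti_apply_coe, exteriorPower.ιMulti_apply_coe,
    ExteriorAlgebra.ιMulti_succ_apply]
  rfl

theorem extmap_coe (g : M →ₗ[R] M') (p : ℕ) (x : ⋀[R]^p M) :
    ((exteriorPower.map p g x : ⋀[R]^p M') : ExteriorAlgebra R M') =
      ExteriorAlgebra.map g (x : ExteriorAlgebra R M) := by
  have : (Submodule.subtype _) ∘ₗ exteriorPower.map p g =
      (ExteriorAlgebra.map g).toLinearMap ∘ₗ (Submodule.subtype (⋀[R]^p M)) := by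
    apply exteriorPower.linearMap_ext
    ext m
    simp [ExteriorAlgebra.map_apply_ιMulti]
  exact congrArg (fun f => f x) this

theorem alt_change (v : M) (g : M →ₗ[R] M') (hk : LinearMap.ker g = Submodule.span R {v})
    {N : Type*} [AddCommGroup N] [Module R N] {p : ℕ} (f : M [⋀^Fin p]→ₗ[R] N)
    (hf : ∀ (m : Fin p → M) i, m i = v → f m = 0) (m m' : Fin p → M)
    (h : ∀ i, g (m i) = g (m' i)) : f m = f m' := by
  have key : ∀ s : Finset (Fin p), f (s.piecewise m' m) = f m := by
    intro s
    induction s using Finset.induction_on with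
    | empty => simp
    | insert j s hj ih =>
      rw [Finset.piecewise_insert, ← ih]
      have h1 : s.piecewise m' m = Function.update (s.piecewise m' m) j (m j) := by
        rw [eq_comm, Function.update_eq_self_iff]; simp [hj]
      conv_rhs => rw [h1]
      have h2 : m' j - m j ∈ Submodule.span R {v} := by
        rw [← hk, LinearMap.mem_ker, map_sub, h j, sub_self]
      obtain ⟨r, hr⟩ := Submodule.mem_span_singleton.1 h2
      rw [← sub_eq_zero, ← f.map_update_sub, ← hr, f.map_update_smul,
        hf _ j (Function.update_self _ _ _), smul_zero]
  rw [← key Finset.univ, Finset.piecewise_univ]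

/-- Descent of an alternating map. -/
theorem alt_descend (v : M) (g : M →ₗ[R] M') (hg : Function.Surjective g)
    (hk : LinearMap.ker g = Submodule.span R {v})
    {N : Type*} [AddCommGroup N] [Module R N] {p : ℕ} (f : M [⋀^Fin p]→ₗ[R] N)
    (hf : ∀ (m : Fin p → M) i, m i = v → f m = 0) :
    ∃ f' : M' [⋀^Fin p]→ₗ[R] N, ∀ m : Fin p → M, f' (fun i => g (m i)) = f m := by
  have hs := Function.surjInv_eq hg
  set s := Function.surjInv hg
  have hch := alt_change v g hk f hf
  refine ⟨{ toFun := fun x => f (fun i => s (x i))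
            map_update_add' := ?_
            map_update_smul' := ?_
            map_eq_zero_of_eq' := ?_ }, ?_⟩
  · intro _ x i a b
    have e : ∀ c d, g d = c → f (fun k => s (Function.update x i c k)) =
        f (Function.update (fun k => s (x k)) i d) := by
      intro c d hcd
      apply hch
      intro k
      rw [hs]
      by_cases hki : k = i
      · subst hki; simp [hcd]
      · simp [hki, hs]
    change f (fun k => s (Function.update x i (a+b) k)) =
      f (fun k => s (Function.update x i a k)) + f (fun k => s (Function.update x i b k))
    rw [e (a+b) (s a + s b) (by simp [hs]), e a (s a) (hs a), e b (s b) (hs b), f.map_update_add]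
  · intro _ x i r a
    have e : ∀ c d, g d = c → f (fun k => s (Function.update x i c k)) =
        f (Function.update (fun k => s (x k)) i d) := by
      intro c d hcd
      apply hch
      intro k
      rw [hs]
      by_cases hki : k = i
      · subst hki; simp [hcd]
      · simp [hki, hs]
    change f (fun k => s (Function.update x i (r • a) k)) =
      r • f (fun k => s (Function.update x i a k))
    rw [e (r • a) (r • s a) (by simp [hs]), e a (s a) (hs a), f.map_update_smul]
  · intro x i j hij hne
    exact f.map_eq_zero_of_eq _ (by simp [hij]) hne
  · intro m
    exact hch _ _ (fun i => hs _)

theorem ker_extmap (v : M) (g : M →ₗ[R] M') (hg : Function.Surjective g)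
    (hk : LinearMap.ker g = Submodule.span R {v}) (q : ℕ) (w : ⋀[R]^(q+1) M)
    (hw : exteriorPower.map (q+1) g w = 0) : ∃ u, w = wedgeL v q u := by
  let f : M [⋀^Fin (q+1)]→ₗ[R] (⋀[R]^(q+1) M ⧸ LinearMap.range (wedgeL (R := R) v q)) :=
    (Submodule.mkQ _).compAlternatingMap (exteriorPower.ιMulti R (q+1))
  have hf0 : ∀ m : Fin (q+1) → M, m 0 = v → f m = 0 := by
    intro m hm
    simp only [f, LinearMap.compAlternatingMap_apply, Submodule.mkQ_apply,
      Submodule.Quotient.mk_eq_zero]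
    refine ⟨exteriorPower.ιMulti R q (Fin.tail m), ?_⟩
    rw [wedgeL_ιMulti, ← hm, Fin.cons_self_tail]
  have hf : ∀ (m : Fin (q+1) → M) i, m i = v → f m = 0 := by
    intro m i hm
    by_cases hi : i = 0
    · subst hi; exact hf0 m hm
    · have := f.map_swap m (i := 0) (j := i) (Ne.symm hi)
      rw [hf0 (m ∘ Equiv.swap 0 i) (by simpa using hm)] at this
      exact neg_eq_zero.1 this.symm
  obtain ⟨f', hf'⟩ := alt_descend v g hg hk f hf
  have hcomp : (exteriorPower.alternatingMapLinearEquiv f') ∘ₗ exteriorPower.map (q+1) g =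
      Submodule.mkQ _ := by
    apply exteriorPower.linearMap_ext
    ext m
    have := hf' m
    simp [f] at this
    simpa [Function.comp_def] using this
  have h2 := congrArg (fun F => F w) hcomp
  simp only [LinearMap.comp_apply, hw, map_zero] at h2
  have h3 := (Submodule.Quotient.mk_eq_zero _).1 h2.symm
  obtain ⟨u, hu⟩ := h3
  exact ⟨u, hu.symm⟩

theorem map_zero_inj (g : M →ₗ[R] M') (w : ⋀[R]^0 M) (hw : exteriorPower.map 0 g w = 0) :
    w = 0 := by
  have := congrArg (fun F => F w) (exteriorPower.zeroEquiv_naturality g)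
  simp [hw] at this
  exact (LinearEquiv.map_eq_zero_iff _).1 this.symm

theorem exists_wedge (v : M) (g : M →ₗ[R] M') (hg : Function.Surjective g)
    (hk : LinearMap.ker g = Submodule.span R {v}) (p : ℕ) :
    ∃ W : ⋀[R]^p M' →ₗ[R] ⋀[R]^(p+1) M,
      (∀ x, W (exteriorPower.map p g x) = wedgeL v p x) ∧
      (∀ y, exteriorPower.map (p+1) g (W y) = 0) ∧
      (∀ z, exteriorPower.map (p+1) g z = 0 → ∃ y, W y = z) ∧
      (∀ (τ : M →ₗ[R] R) y, W y = 0 → τ v • y = 0) := by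
  have hsur := exteriorPower.map_surjective (n := p) hg
  have hker : LinearMap.ker (exteriorPower.map p g) ≤ LinearMap.ker (wedgeL (R := R) v p) := by
    intro w hw
    rw [LinearMap.mem_ker] at hw ⊢
    cases p with
    | zero => rw [map_zero_inj g w hw, map_zero]
    | succ q =>
      obtain ⟨u, rfl⟩ := ker_extmap v g hg hk q w hw
      apply Subtype.ext
      rw [wedgeL_coe, wedgeL_coe, ← mul_assoc, ExteriorAlgebra.ι_sq_zero, zero_mul]
      rfl
  have hgv : g v = 0 := by
    rw [← LinearMap.mem_ker, hk]; exact Submodule.mem_span_singleton_self v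
  let W : ⋀[R]^p M' →ₗ[R] ⋀[R]^(p+1) M :=
    (Submodule.liftQ _ (wedgeL (R := R) v p) hker) ∘ₗ
      ((exteriorPower.map p g).quotKerEquivOfSurjective hsur).symm.toLinearMap
  have hW : ∀ x, W (exteriorPower.map p g x) = wedgeL v p x := by
    intro x
    have : ((exteriorPower.map p g).quotKerEquivOfSurjective hsur).symm (exteriorPower.map p g x)
        = Submodule.Quotient.mk x := by
      rw [LinearEquiv.symm_apply_eq]; rfl
    simp [W, this]
  refine ⟨W, hW, ?_, ?_, ?_⟩
  · intro y
    obtain ⟨x, rfl⟩ := hsur y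
    rw [hW]
    apply Subtype.ext
    rw [extmap_coe, wedgeL_coe, map_mul, ExteriorAlgebra.map_apply_ι, hgv, map_zero, zero_mul]
    rfl
  · intro z hz
    obtain ⟨u, rfl⟩ := ker_extmap v g hg hk p z hz
    exact ⟨_, hW u⟩
  · intro τ y hy
    obtain ⟨x, rfl⟩ := hsur y
    rw [hW] at hy
    have hy' : ExteriorAlgebra.ι R v * (x : ExteriorAlgebra R M) = 0 := by
      rw [← wedgeL_coe, hy]; rfl
    have h1 := CliffordAlgebra.contractLeft_ι_mul (Q := (0 : QuadraticForm R M)) τ v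
      (x : ExteriorAlgebra R M)
    have h2 : CliffordAlgebra.contractLeft (Q := (0 : QuadraticForm R M)) τ
      (ExteriorAlgebra.ι R v * (x : ExteriorAlgebra R M)) = 0 := by rw [hy', map_zero]
    have h3 : τ v • (x : ExteriorAlgebra R M) = ExteriorAlgebra.ι R v *
      (CliffordAlgebra.contractLeft (Q := (0 : QuadraticForm R M)) τ (x : ExteriorAlgebra R M)) :=
      (sub_eq_zero.1 (h1.symm.trans h2))
    apply Subtype.ext
    have h4 := congrArg (ExteriorAlgebra.map g) h3
    rw [map_smul, map_mul, ExteriorAlgebra.map_apply_ι, hgv, map_zero, zero_mul,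
      ← extmap_coe] at h4
    exact h4

end ExteriorStep

section DepthPart

open CategoryTheory MvPolynomial

variable {n : ℕ}

/-- Finite modules killed by a power of each variable. -/
def Tors (N : Type) [AddCommGroup N] [Module (MvPolynomial (Fin n) ℂ) N] : Prop :=
  Module.Finite (MvPolynomial (Fin n) ℂ) N ∧
    ∀ i : Fin n, ∃ k : ℕ, (X i : MvPolynomial (Fin n) ℂ) ^ k ∈
      Module.annihilator (MvPolynomial (Fin n) ℂ) N

/-- Depth at least `d` with respect to the irrelevant ideal, via vanishing of Ext. -/
def Dep (d : ℕ) (M : Type) [AddCommGroup M] [Module (MvPolynomial (Fin n) ℂ) M] : Prop :=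
  ∀ N : ModuleCat.{0} (MvPolynomial (Fin n) ℂ), Tors (n := n) N → ∀ i < d,
    Subsingleton (Abelian.Ext N (ModuleCat.of (MvPolynomial (Fin n) ℂ) M) i)

theorem ofList_take_ofFn (i : ℕ) :
    Ideal.ofList ((List.ofFn (fun j : Fin n => (X j : MvPolynomial (Fin n) ℂ))).take i) =
      Ideal.span ((X : Fin n → MvPolynomial (Fin n) ℂ) '' {j | (j : ℕ) < i}) := by
  unfold Ideal.ofList
  congr 1
  ext r
  simp only [Set.mem_ofPred_eq, Set.mem_image]
  rw [List.mem_iff_getElem]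
  simp only [List.getElem_take, List.getElem_ofFn, List.length_take, List.length_ofFn]
  constructor
  · rintro ⟨k, hk, rfl⟩
    exact ⟨⟨k, by omega⟩, by simp; omega, rfl⟩
  · rintro ⟨j, hj, rfl⟩
    exact ⟨j, by have := j.2; omega, rfl⟩

theorem isRegular_vars :
    RingTheory.Sequence.IsRegular (MvPolynomial (Fin n) ℂ)
      (List.ofFn (fun j : Fin n => (X j : MvPolynomial (Fin n) ℂ))) := by
  refine ⟨⟨?_⟩, ?_⟩
  · intro i h
    have hi : i < n := by simpa using h
    rw [isSMulRegular_iff_right_eq_zero_of_smul]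
    intro y hy
    obtain ⟨y, rfl⟩ := Submodule.Quotient.mk_surjective _ y
    rw [← Submodule.Quotient.mk_smul, Submodule.Quotient.mk_eq_zero] at hy
    rw [Submodule.Quotient.mk_eq_zero]
    rw [ofList_take_ofFn, smul_eq_mul, Ideal.mul_top] at hy ⊢
    rw [smul_eq_mul, List.getElem_ofFn] at hy
    rw [mem_ideal_span_X_image] at hy ⊢
    intro m hm
    obtain ⟨j, hj, hj'⟩ := hy (m + Finsupp.single ⟨i, hi⟩ 1) (by
      rw [mem_support_iff, mul_comm, coeff_mul_X]
      exact mem_support_iff.mp hm)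
    refine ⟨j, hj, ?_⟩
    have hne : (⟨i, hi⟩ : Fin n) ≠ j := by
      rintro rfl
      simp at hj
    simpa [Finsupp.single_apply, hne] using hj'
  · intro h
    have h1 : (1 : MvPolynomial (Fin n) ℂ) ∈ (⊤ : Submodule (MvPolynomial (Fin n) ℂ) (MvPolynomial (Fin n) ℂ)) := trivial
    rw [h, ← List.take_length (l := List.ofFn _), ofList_take_ofFn, smul_eq_mul, Ideal.mul_top,
      mem_ideal_span_X_image] at h1
    obtain ⟨i, -, hi⟩ := h1 0 (by simp)
    simp at hi

theorem dep_self : Dep (n := n) n (MvPolynomial (Fin n) ℂ) := by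
  intro N hN i hi
  have hfin := hN.1
  set rs := List.ofFn (fun j : Fin n => (X j : MvPolynomial (Fin n) ℂ)) with hrs
  have hreg := isRegular_vars (n := n)
  refine ModuleCat.subsingleton_ext_of_exists_isRegular (Ideal.ofList rs) N ?_
    (ModuleCat.of _ (MvPolynomial (Fin n) ℂ)) ?_ rs ?_ ?_ i (by simpa [hrs] using hi)
  · rw [Module.support_eq_zeroLocus, PrimeSpectrum.zeroLocus_subset_zeroLocus_iff]
    unfold Ideal.ofList
    rw [Ideal.span_le]
    intro r hr
    obtain ⟨j, rfl⟩ : ∃ j : Fin n, X j = r := by simpa [hrs, List.mem_ofFn] using hr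
    obtain ⟨k, hk⟩ := hN.2 j
    exact ⟨k, hk⟩
  · exact lt_top_iff_ne_top.mpr (Ne.symm hreg.top_ne_smul)
  · intro r hr
    exact Ideal.subset_span hr
  · exact hreg

theorem dep_mono {d e : ℕ} (h : d ≤ e) {M : Type} [AddCommGroup M]
    [Module (MvPolynomial (Fin n) ℂ) M] (hM : Dep (n := n) e M) : Dep (n := n) d M :=
  fun N hN i hi => hM N hN i (by omega)

theorem dep_free {ι : Type} [Fintype ι] {M : Type} [AddCommGroup M]
    [Module (MvPolynomial (Fin n) ℂ) M] (b : Module.Basis ι (MvPolynomial (Fin n) ℂ) M) :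
    Dep (n := n) n M := by
  classical
  intro N hN i hi
  have h0 := dep_self N hN i hi
  have hid : 𝟙 (ModuleCat.of (MvPolynomial (Fin n) ℂ) M) =
      ∑ l : ι, ModuleCat.ofHom (b.coord l) ≫
        ModuleCat.ofHom (LinearMap.toSpanSingleton (MvPolynomial (Fin n) ℂ) M (b l)) := by
    apply ModuleCat.hom_ext
    apply LinearMap.ext
    intro x
    rw [ModuleCat.hom_sum]
    simp [LinearMap.sum_apply, b.sum_repr]
  refine subsingleton_of_forall_eq 0 fun x => ?_
  rw [← Abelian.Ext.comp_mk₀_id x, hid, Abelian.Ext.mk₀_sum, Abelian.Ext.comp_sum]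
  refine Finset.sum_eq_zero fun l _ => ?_
  rw [← Abelian.Ext.mk₀_comp_mk₀, ← Abelian.Ext.comp_assoc_of_second_deg_zero,
    Subsingleton.elim (x.comp (Abelian.Ext.mk₀ (ModuleCat.ofHom (b.coord l))) _) 0,
    Abelian.Ext.zero_comp]

theorem dep_equiv {d : ℕ} {M M' : Type} [AddCommGroup M] [AddCommGroup M']
    [Module (MvPolynomial (Fin n) ℂ) M] [Module (MvPolynomial (Fin n) ℂ) M']
    (e : M ≃ₗ[MvPolynomial (Fin n) ℂ] M') (hM : Dep (n := n) d M) : Dep (n := n) d M' := by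
  intro N hN i hi
  have h0 := hM N hN i hi
  refine subsingleton_of_forall_eq 0 fun x => ?_
  have hid : 𝟙 (ModuleCat.of (MvPolynomial (Fin n) ℂ) M') =
      ModuleCat.ofHom e.symm.toLinearMap ≫ ModuleCat.ofHom e.toLinearMap := by
    ext x
    simp
  rw [← Abelian.Ext.comp_mk₀_id x, hid, ← Abelian.Ext.mk₀_comp_mk₀,
    ← Abelian.Ext.comp_assoc_of_second_deg_zero,
    Subsingleton.elim (x.comp (Abelian.Ext.mk₀ (ModuleCat.ofHom e.symm.toLinearMap)) _) 0,
    Abelian.Ext.zero_comp]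

theorem dep_quot {d : ℕ}
    {S : ShortComplex (ModuleCat.{0} (MvPolynomial (Fin n) ℂ))} (hS : S.ShortExact)
    (h2 : Dep (n := n) d S.X₂) (h1 : Dep (n := n) (d+1) S.X₁) : Dep (n := n) d S.X₃ := by
  intro N hN i hi
  have h0 := h2 N hN i hi
  have h0' := h1 N hN (i+1) (by omega)
  refine subsingleton_of_forall_eq 0 fun x => ?_
  obtain ⟨y, hy⟩ := Abelian.Ext.covariant_sequence_exact₃ N hS x rfl
    (Subsingleton.elim (α := Abelian.Ext N (ModuleCat.of (MvPolynomial (Fin n) ℂ) S.X₁) (i+1)) _ _)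
  rw [← hy, Subsingleton.elim (α := Abelian.Ext N (ModuleCat.of (MvPolynomial (Fin n) ℂ) S.X₂) i) y 0,
    Abelian.Ext.zero_comp]

theorem tors_span {M : Type} [AddCommGroup M] [Module (MvPolynomial (Fin n) ℂ) M] (x : M)
    (hx : ∀ i, ∃ k : ℕ, (X i : MvPolynomial (Fin n) ℂ) ^ k • x = 0) :
    Tors (n := n) (Submodule.span (MvPolynomial (Fin n) ℂ) {x}) := by
  refine ⟨inferInstance, fun i => ?_⟩
  obtain ⟨k, hk⟩ := hx i
  refine ⟨k, ?_⟩
  rw [Module.mem_annihilator]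
  rintro ⟨y, hy⟩
  obtain ⟨r, rfl⟩ := Submodule.mem_span_singleton.mp hy
  apply Subtype.ext
  simp only [Submodule.coe_smul_of_tower, ZeroMemClass.coe_zero]
  rw [smul_comm, hk, smul_zero]

theorem dep_one_torsion {M : Type} [AddCommGroup M] [Module (MvPolynomial (Fin n) ℂ) M]
    (hM : Dep (n := n) 1 M) (x : M)
    (hx : ∀ i, ∃ k : ℕ, (X i : MvPolynomial (Fin n) ℂ) ^ k • x = 0) : x = 0 := by
  have h0 := hM (ModuleCat.of _ (Submodule.span (MvPolynomial (Fin n) ℂ) {x})) (tors_span x hx) 0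
    (by omega)
  have h1 := Abelian.Ext.addEquiv₀.symm.toEquiv.subsingleton_congr.mpr h0
  have h2 := Subsingleton.elim
    (ModuleCat.ofHom (Submodule.span (MvPolynomial (Fin n) ℂ) {x}).subtype) 0
  have h3 := congrArg (fun φ => φ.hom ⟨x, Submodule.mem_span_singleton_self x⟩) h2
  simpa using h3

theorem dep_two_surj {A B : Type} [AddCommGroup A] [AddCommGroup B]
    [Module (MvPolynomial (Fin n) ℂ) A] [Module (MvPolynomial (Fin n) ℂ) B]
    (f : A →ₗ[MvPolynomial (Fin n) ℂ] B) (hf : Function.Injective f) (hA : Dep (n := n) 2 A)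
    (hB : ∀ b : B, (∀ i, ∃ k : ℕ, (X i : MvPolynomial (Fin n) ℂ) ^ k • b = 0) → b = 0)
    (h : ∀ b : B, ∀ i, ∃ k : ℕ, (X i : MvPolynomial (Fin n) ℂ) ^ k • b ∈ LinearMap.range f) :
    Function.Surjective f := by
  intro b
  let S : ShortComplex (ModuleCat.{0} (MvPolynomial (Fin n) ℂ)) :=
    ModuleCat.shortComplexOfCompEqZero f (LinearMap.range f).mkQ (by ext; simp)
  have hS : S.ShortExact := by
    refine ModuleCat.shortComplex_shortExact S ?_ hf (Submodule.mkQ_surjective _)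
    intro y
    show (LinearMap.range f).mkQ y = 0 ↔ y ∈ Set.range f
    simp
  let q := (LinearMap.range f).mkQ b
  have hq : ∀ i, ∃ k : ℕ, (X i : MvPolynomial (Fin n) ℂ) ^ k • q = 0 := by
    intro i
    obtain ⟨k, hk⟩ := h b i
    refine ⟨k, ?_⟩
    rw [← map_smul]
    exact (Submodule.Quotient.mk_eq_zero _).mpr hk
  have hT := tors_span q hq
  let N := Submodule.span (MvPolynomial (Fin n) ℂ) {q}
  have h1 := hA (ModuleCat.of _ N) hT 1 (by omega)
  let ι : ModuleCat.of _ N ⟶ S.X₃ := ModuleCat.ofHom N.subtype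
  obtain ⟨y, hy⟩ := Abelian.Ext.covariant_sequence_exact₃ (ModuleCat.of _ N) hS
    (Abelian.Ext.mk₀ ι) (n₁ := 1) rfl
    (Subsingleton.elim (α := Abelian.Ext (ModuleCat.of _ N)
      (ModuleCat.of (MvPolynomial (Fin n) ℂ) A) 1) _ _)
  obtain ⟨g, rfl⟩ := Abelian.Ext.addEquiv₀.symm.surjective y
  have hy' : Abelian.Ext.mk₀ (g ≫ S.g) = Abelian.Ext.mk₀ ι := by
    rw [← hy, ← Abelian.Ext.mk₀_comp_mk₀]
    rfl
  have hg : g ≫ S.g = ι := Abelian.Ext.addEquiv₀.symm.injective hy'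
  let q' : N := ⟨q, Submodule.mem_span_singleton_self q⟩
  have hgq : (LinearMap.range f).mkQ (g.hom q') = q :=
    congrArg (fun φ => φ.hom q') hg
  have hz : (g.hom q' : B) = 0 := by
    apply hB
    intro i
    obtain ⟨k, hk⟩ := hT.2 i
    refine ⟨k, ?_⟩
    have := Module.mem_annihilator.mp hk q'
    have h4 := congrArg g.hom this
    rw [map_smul, map_zero] at h4
    exact h4
  rw [hz, map_zero] at hgq
  have : b ∈ LinearMap.range f := by
    simpa [q] using hgq.symm
  exact this

end DepthPart
section TamePart

open CategoryTheory MvPolynomial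

variable {n : ℕ}

/-- Exterior powers of `M` have the expected projective dimension and depth. -/
def Tame (M : Type) [AddCommGroup M] [Module (MvPolynomial (Fin n) ℂ) M] : Prop :=
  ∀ p : ℕ, p ≤ n →
    HasProjectiveDimensionLT (ModuleCat.of (MvPolynomial (Fin n) ℂ)
      (⋀[MvPolynomial (Fin n) ℂ]^p M)) (p+1) ∧
    Dep (n := n) (n - p) (⋀[MvPolynomial (Fin n) ℂ]^p M)

theorem pd_free (M : Type) [AddCommGroup M] [Module (MvPolynomial (Fin n) ℂ) M]
    [Module.Free (MvPolynomial (Fin n) ℂ) M] (p : ℕ) :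
    HasProjectiveDimensionLT (ModuleCat.of (MvPolynomial (Fin n) ℂ) M) (p+1) := by
  have : Projective (ModuleCat.of (MvPolynomial (Fin n) ℂ) M) :=
    ModuleCat.projective_of_free (Module.Free.chooseBasis (MvPolynomial (Fin n) ℂ) M)
  exact hasProjectiveDimensionLT_of_ge _ 1 (p+1) (by omega)

theorem pd_equiv {M M' : Type} [AddCommGroup M] [Module (MvPolynomial (Fin n) ℂ) M]
    [AddCommGroup M'] [Module (MvPolynomial (Fin n) ℂ) M']
    (e : M ≃ₗ[MvPolynomial (Fin n) ℂ] M') (p : ℕ)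
    (h : HasProjectiveDimensionLT (ModuleCat.of (MvPolynomial (Fin n) ℂ) M) p) :
    HasProjectiveDimensionLT (ModuleCat.of (MvPolynomial (Fin n) ℂ) M') p :=
  hasProjectiveDimensionLT_of_iso e.toModuleIso p

/-- Functoriality of exterior powers for equivalences. -/
def extEquiv {R M M' : Type} [CommRing R] [AddCommGroup M] [Module R M]
    [AddCommGroup M'] [Module R M'] (e : M ≃ₗ[R] M') (p : ℕ) : ⋀[R]^p M ≃ₗ[R] ⋀[R]^p M' :=
  LinearEquiv.ofLinearMap (exteriorPower.map p e.toLinearMap) (exteriorPower.map p e.symm.toLinearMap)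
    (by rw [← exteriorPower.map_comp]; simp)
    (by rw [← exteriorPower.map_comp]; simp)

theorem tame_equiv {M M' : Type} [AddCommGroup M] [Module (MvPolynomial (Fin n) ℂ) M]
    [AddCommGroup M'] [Module (MvPolynomial (Fin n) ℂ) M']
    (e : M ≃ₗ[MvPolynomial (Fin n) ℂ] M') (h : Tame (n := n) M) : Tame (n := n) M' :=
  fun p hp => ⟨pd_equiv (extEquiv e p) _ (h p hp).1, dep_equiv (extEquiv e p) (h p hp).2⟩

theorem tame_free (M : Type) [AddCommGroup M] [Module (MvPolynomial (Fin n) ℂ) M]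
    [Module.Free (MvPolynomial (Fin n) ℂ) M] [Module.Finite (MvPolynomial (Fin n) ℂ) M] :
    Tame (n := n) M := by
  intro p _
  refine ⟨pd_free _ p, dep_mono (Nat.sub_le n p) ?_⟩
  exact dep_free (Module.Free.chooseBasis (MvPolynomial (Fin n) ℂ)
    (⋀[MvPolynomial (Fin n) ℂ]^p M))

theorem tame_step {M M' : Type} [AddCommGroup M] [Module (MvPolynomial (Fin n) ℂ) M]
    [AddCommGroup M'] [Module (MvPolynomial (Fin n) ℂ) M'] (hM : Tame (n := n) M)
    (g : M →ₗ[MvPolynomial (Fin n) ℂ] M') (hg : Function.Surjective g) (v : M)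
    (hk : LinearMap.ker g = Submodule.span (MvPolynomial (Fin n) ℂ) {v})
    (hτ : ∀ i, ∃ (N : ℕ) (τ : M →ₗ[MvPolynomial (Fin n) ℂ] MvPolynomial (Fin n) ℂ),
      τ v = X i ^ N) : Tame (n := n) M' := by
  intro p
  induction p with
  | zero =>
    intro _
    exact ⟨pd_equiv (exteriorPower.zeroEquiv _ _).symm _ (pd_free _ 0),
      dep_equiv (exteriorPower.zeroEquiv _ _).symm dep_self⟩
  | succ p ih =>
    intro hp
    obtain ⟨hpd, hdep⟩ := ih (by omega)
    obtain ⟨W, -, hW2, hW3, hW4⟩ := exists_wedge v g hg hk p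
    have hinj : Function.Injective W := by
      rw [injective_iff_map_eq_zero]
      intro y hy
      refine dep_one_torsion (dep_mono (by omega) hdep) y fun i => ?_
      obtain ⟨N, τ, h⟩ := hτ i
      exact ⟨N, h ▸ hW4 τ y hy⟩
    let S : ShortComplex (ModuleCat.{0} (MvPolynomial (Fin n) ℂ)) :=
      ModuleCat.shortComplexOfCompEqZero W (exteriorPower.map (p+1) g)
        (LinearMap.ext fun y => hW2 y)
    have hS : S.ShortExact := by
      refine ModuleCat.shortComplex_shortExact S ?_ hinj (exteriorPower.map_surjective hg)
      intro z
      constructor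
      · exact fun h => hW3 z h
      · rintro ⟨y, rfl⟩
        exact hW2 y
    obtain ⟨hpd2, hdep2⟩ := hM (p+1) hp
    constructor
    · exact hS.hasProjectiveDimensionLT_X₃ (p+1) hpd hpd2
    · exact dep_quot hS hdep2 (dep_mono (by omega) hdep)

theorem tame_quot {G : Type} [AddCommGroup G] [Module (MvPolynomial (Fin n) ℂ) G]
    (hG : Tame (n := n) G) : ∀ (k : ℕ) (v : Fin k → G)
    (_ : ∀ i, ∃ (N : ℕ) (τ : Fin k → (G →ₗ[MvPolynomial (Fin n) ℂ] MvPolynomial (Fin n) ℂ)),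
      ∀ j l, τ j (v l) = if j = l then X i ^ N else 0),
    Tame (n := n) (G ⧸ Submodule.span (MvPolynomial (Fin n) ℂ) (Set.range v)) := by
  intro k
  induction k with
  | zero =>
    intro v _
    refine tame_equiv (Submodule.quotEquivOfEqBot _ ?_).symm hG
    simp
  | succ k ih =>
    intro v hτ
    have h1 := ih (fun l => v l.castSucc) (by
      intro i
      obtain ⟨N, τ, h⟩ := hτ i
      refine ⟨N, fun j => τ j.castSucc, fun j l => ?_⟩
      rw [h]
      simp)
    set U := Submodule.span (MvPolynomial (Fin n) ℂ) (Set.range fun l : Fin k => v l.castSucc)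
      with hU
    set U' := Submodule.span (MvPolynomial (Fin n) ℂ) (Set.range v) with hU'
    have hUU : U' = U ⊔ Submodule.span (MvPolynomial (Fin n) ℂ) {v (Fin.last k)} := by
      rw [hU, hU', ← Submodule.span_union]
      congr 1
      ext x
      simp only [Set.mem_range, Set.mem_union, Set.mem_singleton_iff, Fin.exists_fin_succ',
        eq_comm]
    have hle : U ≤ LinearMap.ker U'.mkQ := by
      rw [Submodule.ker_mkQ, hUU]
      exact le_sup_left
    refine tame_step h1 (U.liftQ U'.mkQ hle) ?_ (U.mkQ (v (Fin.last k))) ?_ ?_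
    · intro y
      obtain ⟨y, rfl⟩ := U'.mkQ_surjective y
      exact ⟨U.mkQ y, by simp⟩
    · rw [Submodule.ker_liftQ, Submodule.ker_mkQ, hUU, Submodule.map_sup, Submodule.mkQ_map_self,
        bot_sup_eq, Submodule.map_span, Set.image_singleton]
    · intro i
      obtain ⟨N, τ, h⟩ := hτ i
      refine ⟨N, U.liftQ (τ (Fin.last k)) ?_, ?_⟩
      · rw [hU, Submodule.span_le]
        rintro _ ⟨l, rfl⟩
        simp [h, (Fin.castSucc_lt_last l).ne']
      · simp [h]

end TamePart
section LocalSection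

theorem Q_surj_at (n m : ℕ) (hn : 2 ≤ n) (f : Fin m → Rp n) (d : Fin m → ℕ)
    (hfh : ∀ i, (f i).IsHomogeneous (d i)) (hsnc : SNC n m f)
    (p : Fin n → ℂ) (hp : p ≠ 0) (y : Fin m → ℂ) :
    ∃ x : Fin m ⊕ Fin n → ℂ, ((Qmat n m f).map (eval p)).mulVec x = y := by
  classical
  have euler : ∀ i, eval p (f i) = 0 → ∑ j, eval p (pderiv j (f i)) * p j = 0 := by
    intro i hi
    have h := congrArg (eval p) (hfh i).sum_X_mul_pderiv
    simp only [map_sum, map_mul, eval_X, map_nsmul, hi, smul_zero] at h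
    simpa [mul_comm] using h
  set I : Finset (Fin m) := Finset.univ.filter fun i => eval p (f i) = 0 with hI
  have hIz : ∀ i ∈ I, eval p (f i) = 0 := fun i hi => by simpa [hI] using hi
  have hcard : I.card ≤ n := by
    by_contra hlt
    obtain ⟨J, hJI, hJ⟩ := Finset.exists_subset_card_eq (s := I) (n := n) (by omega)
    have hr := hsnc.2 J (by omega) (by omega) p hp (fun i hi => hIz i (hJI hi))
    set A := Matrix.of fun (i : J) (j : Fin n) => eval p (pderiv j (f i.1)) with hA
    have hker : A.mulVecLin p = 0 := by
      ext i
      simp only [Matrix.mulVecLin_apply, Matrix.mulVec, dotProduct, hA, Matrix.of_apply]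
      exact euler _ (hIz _ (hJI i.2))
    have h1 := LinearMap.finrank_range_add_finrank_ker A.mulVecLin
    rw [← Matrix.rank, hr, hJ] at h1
    have h2 : Module.finrank ℂ (LinearMap.ker A.mulVecLin) = 0 := by simpa using h1
    rw [Submodule.finrank_eq_zero] at h2
    have : p ∈ LinearMap.ker A.mulVecLin := hker
    rw [h2] at this
    exact hp (by simpa using this)
  obtain ⟨θ, hθ⟩ : ∃ θ : Fin n → ℂ, ∀ i ∈ I, ∑ j, eval p (pderiv j (f i)) * θ j = y i := by
    rcases Nat.eq_zero_or_pos I.card with h0 | hpos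
    · rw [Finset.card_eq_zero] at h0
      exact ⟨0, by simp [h0]⟩
    · have hr := hsnc.2 I hpos hcard p hp hIz
      set A := Matrix.of fun (i : I) (j : Fin n) => eval p (pderiv j (f i.1)) with hA
      have htop : LinearMap.range A.mulVecLin = ⊤ := by
        apply Submodule.eq_top_of_finrank_eq
        rw [← Matrix.rank, hr]
        simp
      obtain ⟨θ, hθ⟩ := LinearMap.range_eq_top.mp htop (fun i => y i.1)
      exact ⟨θ, fun i hi => congrFun hθ ⟨i, hi⟩⟩
  refine ⟨Sum.elim (fun i => (y i - ∑ j, eval p (pderiv j (f i)) * θ j) / eval p (f i)) θ, ?_⟩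
  ext i
  simp only [Matrix.mulVec, dotProduct, Fintype.sum_sum_type, Matrix.map_apply, Qmat,
    Matrix.of_apply, Sum.elim_inl, Sum.elim_inr, apply_ite (eval p), map_zero, ite_mul, zero_mul,
    Finset.sum_ite_eq, Finset.mem_univ, if_true]
  by_cases hi : eval p (f i) = 0
  · rw [hi, zero_mul, zero_add]
    exact hθ i (by simpa [hI] using hi)
  · rw [mul_div_cancel₀ _ hi]
    ring

theorem exists_section (n m : ℕ) (hn : 2 ≤ n) (f : Fin m → Rp n) (d : Fin m → ℕ)
    (hfh : ∀ i, (f i).IsHomogeneous (d i)) (hsnc : SNC n m f) (i : Fin n) :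
    ∃ (N : ℕ) (s : Matrix (Fin m ⊕ Fin n) (Fin m) (Rp n)),
      Qmat n m f * s = (X i ^ N : Rp n) • (1 : Matrix (Fin m) (Fin m) (Rp n)) := by
  classical
  let I : Ideal (Rp n) :=
    { carrier := {r | ∃ s : Matrix (Fin m ⊕ Fin n) (Fin m) (Rp n),
        Qmat n m f * s = r • (1 : Matrix (Fin m) (Fin m) (Rp n))}
      add_mem' := by
        rintro a b ⟨s, hs⟩ ⟨t, ht⟩
        exact ⟨s + t, by rw [Matrix.mul_add, hs, ht, add_smul]⟩
      zero_mem' := ⟨0, by simp⟩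
      smul_mem' := by
        rintro c a ⟨s, hs⟩
        exact ⟨c • s, by rw [Matrix.mul_smul, hs, smul_smul, smul_eq_mul]⟩ }
  have key : (X i : Rp n) ∈ I.radical := by
    rw [← MvPolynomial.vanishingIdeal_zeroLocus_eq_radical (K := ℂ) I]
    rw [MvPolynomial.mem_vanishingIdeal_iff]
    intro p hp
    rw [MvPolynomial.mem_zeroLocus_iff] at hp
    by_cases hp0 : p = 0
    · simp [hp0]
    · exfalso
      choose x hx using fun l : Fin m => Q_surj_at n m hn f d hfh hsnc p hp0 (Pi.single l 1)
      let B : Matrix (Fin m ⊕ Fin n) (Fin m) ℂ := Matrix.of fun a l => x l a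
      have hB : (Qmat n m f).map (eval p) * B = 1 := by
        ext k l
        have := congrFun (hx l) k
        rw [Matrix.mul_apply]
        simp only [Matrix.mulVec, dotProduct] at this
        rw [Matrix.one_apply]
        simpa [B, Pi.single_apply] using this
      let D := Qmat n m f * B.map (C : ℂ → Rp n)
      have hD : D.det ∈ I := by
        refine ⟨B.map (C : ℂ → Rp n) * D.adjugate, ?_⟩
        rw [← Matrix.mul_assoc]
        exact Matrix.mul_adjugate D
      have h1 := hp _ hD
      have h2 : eval p D.det = 1 := by
        rw [RingHom.map_det, RingHom.mapMatrix_apply, Matrix.map_mul, Matrix.map_map]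
        have : B.map (⇑(eval p) ∘ ⇑(C : ℂ →+* Rp n)) = B := by
          ext a b; simp
        rw [this, hB, Matrix.det_one]
      rw [MvPolynomial.aeval_eq_eval] at h1
      simp [h2] at h1
  obtain ⟨N, s, hs⟩ := key
  exact ⟨N, s, hs⟩

end LocalSection
section DualPart

/-- The kernel of the matrix `Q`. -/
def KerQ (n m : ℕ) (f : Fin m → Rp n) : Submodule (Rp n) (Fin m ⊕ Fin n → Rp n) :=
  LinearMap.ker (Qmat n m f).mulVecLin

theorem Qmat_mulVec (n m : ℕ) (f : Fin m → Rp n) (w : Fin m ⊕ Fin n → Rp n) (i : Fin m) :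
    (Qmat n m f).mulVec w i =
      f i * w (Sum.inl i) + ∑ j, pderiv j (f i) * w (Sum.inr j) := by
  classical
  simp only [Matrix.mulVec, dotProduct, Fintype.sum_sum_type, Qmat,
    Matrix.of_apply, Sum.elim_inl, Sum.elim_inr, ite_mul, zero_mul,
    Finset.sum_ite_eq, Finset.mem_univ, if_true]

theorem mem_KerQ (n m : ℕ) (f : Fin m → Rp n) (w : Fin m ⊕ Fin n → Rp n) :
    w ∈ KerQ n m f ↔ ∀ i, f i * w (Sum.inl i) + ∑ j, pderiv j (f i) * w (Sum.inr j) = 0 := by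
  unfold KerQ
  rw [LinearMap.mem_ker, Matrix.mulVecLin_apply, funext_iff]
  simp only [Qmat_mulVec, Pi.zero_apply]

/-- The projection from the kernel of `Q` to logarithmic derivations. -/
def kerToDer (n m : ℕ) (f : Fin m → Rp n) : KerQ n m f →ₗ[Rp n] DerA n m f :=
  LinearMap.codRestrict (DerA n m f)
    ((LinearMap.funLeft (Rp n) (Rp n) (Sum.inr : Fin n → Fin m ⊕ Fin n)).comp
      (KerQ n m f).subtype) (by
    rintro ⟨w, hw⟩ i
    refine ⟨- w (Sum.inl i), ?_⟩
    have h := (mem_KerQ n m f w).mp hw i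
    have h2 : ∑ j, w (Sum.inr j) * pderiv j (f i) = ∑ j, pderiv j (f i) * w (Sum.inr j) :=
      Finset.sum_congr rfl fun j _ => mul_comm _ _
    show ∑ j, w (Sum.inr j) * pderiv j (f i) = _
    rw [h2]
    linear_combination h)

theorem kerToDer_apply (n m : ℕ) (f : Fin m → Rp n) (w : KerQ n m f) (j : Fin n) :
    (kerToDer n m f w : Fin n → Rp n) j = (w : Fin m ⊕ Fin n → Rp n) (Sum.inr j) := rfl

theorem kerToDer_bij (n m : ℕ) (f : Fin m → Rp n) (hf0 : ∀ i, f i ≠ 0) :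
    Function.Bijective (kerToDer n m f) := by
  constructor
  · rw [injective_iff_map_eq_zero]
    rintro ⟨w, hw⟩ h
    have hj : ∀ j, w (Sum.inr j) = 0 := fun j =>
      congrFun (congrArg Subtype.val h) j
    apply Subtype.ext
    funext a
    rcases a with i | j
    · have h1 := (mem_KerQ n m f w).mp hw i
      simp only [hj, mul_zero, Finset.sum_const_zero, add_zero] at h1
      exact (mul_eq_zero.mp h1).resolve_left (hf0 i)
    · exact hj j
  · rintro ⟨θ, hθ⟩
    have hθ0 : ∀ i, f i ∣ ∑ j, θ j * pderiv j (f i) := hθ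
    choose a ha using hθ0
    refine ⟨⟨Sum.elim (fun i => - a i) θ, ?_⟩, ?_⟩
    · rw [mem_KerQ]
      intro i
      have h2 : ∑ j, θ j * pderiv j (f i) = ∑ j, pderiv j (f i) * θ j :=
        Finset.sum_congr rfl fun j _ => mul_comm _ _
      have := ha i
      simp only [Sum.elim_inl, Sum.elim_inr]
      rw [← h2, this]
      ring
    · apply Subtype.ext
      rfl

theorem tame_dual (n m : ℕ) (hn : 3 ≤ n) (f : Fin m → Rp n)
    (hf0 : ∀ i, f i ≠ 0)
    (hs : ∀ i : Fin n, ∃ (N : ℕ) (s : Matrix (Fin m ⊕ Fin n) (Fin m) (Rp n)),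
      Qmat n m f * s = (X i ^ N : Rp n) • (1 : Matrix (Fin m) (Fin m) (Rp n))) :
    Tame (n := n) (Module.Dual (Rp n) (DerA n m f)) := by
  classical
  set Q := Qmat n m f with hQ
  set U := Submodule.span (Rp n) (Set.range fun l => Q l) with hU
  have hT : Tame (n := n) ((Fin m ⊕ Fin n → Rp n) ⧸ U) := by
    refine tame_quot (tame_free _) m _ fun i => ?_
    obtain ⟨N, s, h⟩ := hs i
    refine ⟨N, fun j => (LinearMap.proj j).comp (Matrix.vecMulLinear s), ?_⟩
    intro j l
    have := congrFun (congrFun h l) j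
    simp only [LinearMap.comp_apply, LinearMap.proj_apply]
    rw [Matrix.mul_apply] at this
    simp only [Matrix.smul_apply, Matrix.one_apply, smul_eq_mul, mul_ite, mul_one, mul_zero,
      eq_comm (a := l)] at this
    exact this
  have hD1 : Dep (n := n) 2 ((Fin m ⊕ Fin n → Rp n) ⧸ U) :=
    dep_mono (by omega) (dep_equiv (exteriorPower.oneEquiv _ _) (hT 1 (by omega)).2)
  -- the pairing
  let Φ0 : (Fin m ⊕ Fin n → Rp n) →ₗ[Rp n] Module.Dual (Rp n) (KerQ n m f) :=
    ((dotProductBilin (Rp n) (Rp n)).compl₂ (KerQ n m f).subtype)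
  have hΦ0 : ∀ g w, Φ0 g w = g ⬝ᵥ (w : Fin m ⊕ Fin n → Rp n) := fun g w => rfl
  have hle : U ≤ LinearMap.ker Φ0 := by
    rw [hU, Submodule.span_le]
    rintro _ ⟨l, rfl⟩
    rw [SetLike.mem_coe, LinearMap.mem_ker]
    refine LinearMap.ext fun w => ?_
    rw [hΦ0]
    exact congrFun (LinearMap.mem_ker.mp w.2) l
  let Φ := U.liftQ Φ0 hle
  have hΦinj : Function.Injective Φ := by
    rw [injective_iff_map_eq_zero]
    intro x hx
    obtain ⟨g, rfl⟩ := U.mkQ_surjective x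
    have hx' : Φ0 g = 0 := by simpa [Φ] using hx
    refine dep_one_torsion (dep_mono (by omega) hD1) _ fun i => ?_
    obtain ⟨N, s, h⟩ := hs i
    refine ⟨N, ?_⟩
    rw [← map_smul]
    refine (Submodule.Quotient.mk_eq_zero _).mpr ?_
    have h1 : (X i ^ N : Rp n) • g = Matrix.vecMul (Matrix.vecMul g s) Q := by
      apply dotProduct_eq
      intro u
      have hw : (X i ^ N : Rp n) • u - s.mulVec (Q.mulVec u) ∈ KerQ n m f := by
        unfold KerQ
        rw [LinearMap.mem_ker, map_sub, map_smul, Matrix.mulVecLin_apply, Matrix.mulVecLin_apply,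
          Matrix.mulVec_mulVec, h, Matrix.smul_mulVec, Matrix.one_mulVec, sub_self]
      have h2 := LinearMap.congr_fun hx' ⟨_, hw⟩
      rw [hΦ0] at h2
      simp only [dotProduct_sub, dotProduct_smul, LinearMap.zero_apply, sub_eq_zero] at h2
      rw [smul_dotProduct, h2, Matrix.dotProduct_mulVec, Matrix.dotProduct_mulVec]
    rw [h1, Matrix.vecMul_eq_sum]
    refine Submodule.sum_mem _ fun l _ => Submodule.smul_mem _ _ (Submodule.subset_span ⟨l, rfl⟩)
  have hΦsurj : Function.Surjective Φ := by
    refine dep_two_surj Φ hΦinj hD1 ?_ ?_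
    · intro φ hφ
      obtain ⟨k, hk⟩ := hφ ⟨0, by omega⟩
      refine LinearMap.ext fun w => ?_
      have := LinearMap.congr_fun hk w
      simp only [LinearMap.smul_apply, smul_eq_mul, LinearMap.zero_apply, mul_eq_zero] at this
      rw [this.resolve_left (pow_ne_zero _ (X_ne_zero _)), LinearMap.zero_apply]
    · intro φ i
      obtain ⟨N, s, h⟩ := hs i
      refine ⟨N, ?_⟩
      let L : (Fin m ⊕ Fin n → Rp n) →ₗ[Rp n] KerQ n m f :=
        LinearMap.codRestrict (KerQ n m f)
          ((X i ^ N : Rp n) • LinearMap.id - s.mulVecLin.comp Q.mulVecLin) (by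
          intro u
          unfold KerQ
          simp only [LinearMap.sub_apply, LinearMap.smul_apply, LinearMap.id_apply,
            LinearMap.comp_apply]
          rw [LinearMap.mem_ker, map_sub, map_smul, Matrix.mulVecLin_apply, Matrix.mulVecLin_apply,
            Matrix.mulVecLin_apply,
            Matrix.mulVec_mulVec, h, Matrix.smul_mulVec, Matrix.one_mulVec, sub_self])
      refine ⟨U.mkQ fun a => φ (L fun b => if a = b then 1 else 0), ?_⟩
      have : Φ (U.mkQ fun a => φ (L fun b => if a = b then 1 else 0)) =
          Φ0 (fun a => φ (L fun b => if a = b then 1 else 0)) := by simp [Φ]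
      rw [this]
      refine LinearMap.ext fun w => ?_
      rw [hΦ0]
      have h3 := LinearMap.pi_apply_eq_sum_univ (φ.comp L) (w : Fin m ⊕ Fin n → Rp n)
      have h4 : L (w : Fin m ⊕ Fin n → Rp n) = (X i ^ N : Rp n) • w := by
        apply Subtype.ext
        have h5 : Q.mulVec (w : Fin m ⊕ Fin n → Rp n) = 0 := LinearMap.mem_ker.mp w.2
        show (X i ^ N : Rp n) • (w : Fin m ⊕ Fin n → Rp n) - s.mulVec (Q.mulVec _) = _
        rw [h5, Matrix.mulVec_zero, sub_zero]
        rfl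
      rw [LinearMap.comp_apply, h4, map_smul] at h3
      rw [LinearMap.smul_apply, h3]
      simp only [dotProduct, LinearMap.comp_apply, smul_eq_mul]
      exact Finset.sum_congr rfl fun a _ => mul_comm _ _
  let e := LinearEquiv.ofBijective (kerToDer n m f) (kerToDer_bij n m f hf0)
  exact tame_equiv ((LinearEquiv.ofBijective Φ ⟨hΦinj, hΦsurj⟩).trans e.symm.dualMap) hT

end DualPart
section PlaneCase

theorem no_common_X (m : ℕ) (g : Rp 2) (d : ℕ) (hg0 : g ≠ 0) (hg : g.IsHomogeneous d)
    (hd : 1 ≤ d) (h0 : g ∣ X 0) (h1 : g ∣ X 1) : False := by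
  obtain ⟨a, ha⟩ := h0
  have ha0 : a ≠ 0 := by
    rintro rfl
    rw [mul_zero] at ha
    exact X_ne_zero _ ha
  have hdeg := congrArg totalDegree ha
  rw [totalDegree_X, totalDegree_mul_of_isDomain hg0 ha0, hg.totalDegree hg0] at hdeg
  have hda : a.totalDegree = 0 := by omega
  rw [totalDegree_eq_zero_iff_eq_C] at hda
  set c := coeff 0 a with hc
  have hc0 : c ≠ 0 := by
    rintro h
    rw [h, C_0] at hda
    exact ha0 hda
  have h2 : (X 0 : Rp 2) ∣ g := by
    refine ⟨C c⁻¹, ?_⟩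
    rw [ha, hda, mul_assoc, ← C_mul, mul_inv_cancel₀ hc0, C_1, mul_one]
  have h3 := h2.trans h1
  rw [X_dvd_X] at h3
  exact absurd h3 (by decide)

theorem section_entry (n m : ℕ) (f : Fin m → Rp n) (s : Matrix (Fin m ⊕ Fin n) (Fin m) (Rp n))
    (i k : Fin m) : (Qmat n m f * s) i k =
      f i * s (Sum.inl i) k + ∑ j, pderiv j (f i) * s (Sum.inr j) k :=
  Qmat_mulVec n m f (fun a => s a k) i

variable (m : ℕ) (f : Fin m → Rp 2) (d : Fin m → ℕ)

theorem not_dvd_partials (hf0 : ∀ i, f i ≠ 0) (hfh : ∀ i, (f i).IsHomogeneous (d i))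
    (hd : ∀ i, 1 ≤ d i) (hirr : ∀ i, Irreducible (f i))
    (hs : ∀ i : Fin 2, ∃ (N : ℕ) (s : Matrix (Fin m ⊕ Fin 2) (Fin m) (Rp 2)),
      Qmat 2 m f * s = (X i ^ N : Rp 2) • (1 : Matrix (Fin m) (Fin m) (Rp 2)))
    (i : Fin m) (h : ∀ j, f i ∣ pderiv j (f i)) : False := by
  have key : ∀ a : Fin 2, f i ∣ X a := by
    intro a
    obtain ⟨N, s, hN⟩ := hs a
    have h1 := section_entry 2 m f s i i
    rw [hN, Matrix.smul_apply, Matrix.one_apply_eq, smul_eq_mul, mul_one] at h1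
    have h2 : f i ∣ X a ^ N := by
      rw [h1]
      exact dvd_add (Dvd.intro _ rfl) (Finset.dvd_sum fun j _ => (h j).mul_right _)
    exact (hirr i).prime.dvd_of_dvd_pow h2
  exact no_common_X m (f i) (d i) (hf0 i) (hfh i) (hd i) (key 0) (key 1)

theorem not_dvd_other (hf0 : ∀ i, f i ≠ 0) (hfh : ∀ i, (f i).IsHomogeneous (d i))
    (hd : ∀ i, 1 ≤ d i) (hirr : ∀ i, Irreducible (f i))
    (hs : ∀ i : Fin 2, ∃ (N : ℕ) (s : Matrix (Fin m ⊕ Fin 2) (Fin m) (Rp 2)),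
      Qmat 2 m f * s = (X i ^ N : Rp 2) • (1 : Matrix (Fin m) (Fin m) (Rp 2)))
    (i k : Fin m) (hik : i ≠ k) (h : f i ∣ f k) : False := by
  obtain ⟨u, hu⟩ := h
  have key : ∀ a : Fin 2, f i ∣ X a := by
    intro a
    obtain ⟨N, s, hN⟩ := hs a
    have h1 := section_entry 2 m f s k k
    have h0 := section_entry 2 m f s i k
    rw [hN, Matrix.smul_apply, Matrix.one_apply_eq, smul_eq_mul, mul_one] at h1
    rw [hN, Matrix.smul_apply, Matrix.one_apply_ne hik, smul_zero] at h0
    have h2 : f i ∣ X a ^ N := by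
      refine ⟨u * s (Sum.inl k) k - u * s (Sum.inl i) k + ∑ j, pderiv j u * s (Sum.inr j) k, ?_⟩
      rw [h1, hu]
      simp only [Derivation.leibniz, smul_eq_mul, Fin.sum_univ_two] at h0 ⊢
      linear_combination (-u) * h0
    exact (hirr i).prime.dvd_of_dvd_pow h2
  exact no_common_X m (f i) (d i) (hf0 i) (hfh i) (hd i) (key 0) (key 1)

theorem der_prod_dvd (θ : Fin 2 → Rp 2) (h : ∀ i, f i ∣ ∑ j, θ j * pderiv j (f i))
    (s : Finset (Fin m)) : (∏ i ∈ s, f i) ∣ ∑ j, θ j * pderiv j (∏ i ∈ s, f i) := by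
  classical
  induction s using Finset.induction_on with
  | empty => simp
  | insert a s ha ih =>
    rw [Finset.prod_insert ha]
    obtain ⟨u, hu⟩ := h a
    obtain ⟨v, hv⟩ := ih
    refine ⟨u + v, ?_⟩
    simp only [Derivation.leibniz, smul_eq_mul, Fin.sum_univ_two] at hu hv ⊢
    linear_combination (∏ i ∈ s, f i) * hu + f a * hv

theorem derA_free (hm : 1 ≤ m) (hf0 : ∀ i, f i ≠ 0) (hfh : ∀ i, (f i).IsHomogeneous (d i))
    (hd : ∀ i, 1 ≤ d i) (hirr : ∀ i, Irreducible (f i))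
    (hs : ∀ i : Fin 2, ∃ (N : ℕ) (s : Matrix (Fin m ⊕ Fin 2) (Fin m) (Rp 2)),
      Qmat 2 m f * s = (X i ^ N : Rp 2) • (1 : Matrix (Fin m) (Fin m) (Rp 2))) :
    Nonempty ((Rp 2 × Rp 2) ≃ₗ[Rp 2] DerA 2 m f) := by
  classical
  set F := ∏ i, f i with hF
  have hF0 : F ≠ 0 := Finset.prod_ne_zero_iff.mpr fun i _ => hf0 i
  set D := ∑ i, d i with hD
  have hDpos : 1 ≤ D :=
    (hd ⟨0, hm⟩).trans (Finset.single_le_sum (f := d) (fun _ _ => Nat.zero_le _)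
      (Finset.mem_univ _))
  have hFh : F.IsHomogeneous D := IsHomogeneous.prod _ _ _ fun i _ => hfh i
  have hDC : (D : ℂ) ≠ 0 := by exact_mod_cast (by omega : D ≠ 0)
  set Fx := pderiv 0 F with hFx
  set Fy := pderiv 1 F with hFy
  have euler : X 0 * Fx + X 1 * Fy = C (D : ℂ) * F := by
    have := hFh.sum_X_mul_pderiv
    rw [Fin.sum_univ_two, nsmul_eq_mul] at this
    rw [this, map_natCast]
  have heu : ∀ i, X 0 * pderiv 0 (f i) + X 1 * pderiv 1 (f i) = (d i : Rp 2) * f i := by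
    intro i
    have := (hfh i).sum_X_mul_pderiv
    rwa [Fin.sum_univ_two, nsmul_eq_mul] at this
  have hCD : (C (D : ℂ) : Rp 2) * C ((D : ℂ)⁻¹) = 1 := by
    rw [← C_mul, mul_inv_cancel₀ hDC, C_1]
  have hnz : ¬ (Fx = 0 ∧ Fy = 0) := by
    rintro ⟨h1, h2⟩
    rw [h1, h2, mul_zero, mul_zero, add_zero, eq_comm, mul_eq_zero] at euler
    rcases euler with h | h
    · rw [C_eq_zero] at h
      exact hDC h
    · exact hF0 h
  have hfac : ∀ i, F = f i * ∏ k ∈ Finset.univ.erase i, f k := fun i =>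
    (Finset.mul_prod_erase _ _ (Finset.mem_univ i)).symm
  have hrel : IsRelPrime Fx Fy := by
    refine WfDvdMonoid.isRelPrime_of_no_irreducible_factors hnz ?_
    intro z hz hzx hzy
    have hzF : z ∣ F := by
      have : F = C ((D : ℂ)⁻¹) * (X 0 * Fx + X 1 * Fy) := by
        rw [euler]
        linear_combination (- F) * hCD
      rw [this]
      exact ((hzx.mul_left _).add (hzy.mul_left _)).mul_left _
    obtain ⟨i, -, hi⟩ := (hz.prime.dvd_finsetProd_iff _).mp hzF
    have hiz : f i ∣ z := ((hirr i).dvd_iff.mp hi |>.resolve_left hz.not_isUnit).dvd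
    set G := ∏ k ∈ Finset.univ.erase i, f k with hG
    have hj : ∀ j, f i ∣ pderiv j F → f i ∣ pderiv j (f i) * G := by
      intro j hjd
      rw [hfac i, Derivation.leibniz, smul_eq_mul, smul_eq_mul] at hjd
      rw [mul_comm]
      exact (dvd_add_right (Dvd.intro _ rfl)).mp hjd
    have hnG : ¬ f i ∣ G := by
      intro h
      obtain ⟨k, hk, hk'⟩ := ((hirr i).prime.dvd_finsetProd_iff _).mp h
      exact not_dvd_other m f d hf0 hfh hd hirr hs i k (Finset.ne_of_mem_erase hk).symm hk'
    have hj2 : ∀ j, f i ∣ pderiv j F → f i ∣ pderiv j (f i) := fun j hjd =>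
      ((hirr i).prime.dvd_or_dvd (hj j hjd)).resolve_right hnG
    refine not_dvd_partials m f d hf0 hfh hd hirr hs i fun j => ?_
    fin_cases j
    · exact hj2 0 (hiz.trans hzx)
    · exact hj2 1 (hiz.trans hzy)
  -- the map
  let L0 : (Rp 2 × Rp 2) →ₗ[Rp 2] (Fin 2 → Rp 2) :=
    LinearMap.coprod (LinearMap.toSpanSingleton (Rp 2) _ ![X 0, X 1])
      (LinearMap.toSpanSingleton (Rp 2) _ ![Fy, -Fx])
  have hL0 : ∀ a b, L0 (a, b) = ![a * X 0 + b * Fy, a * X 1 - b * Fx] := by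
    intro a b
    ext1 j
    fin_cases j <;> simp [L0, sub_eq_add_neg]
  let L : (Rp 2 × Rp 2) →ₗ[Rp 2] DerA 2 m f := LinearMap.codRestrict _ L0 (by
    rintro ⟨a, b⟩ i
    rw [hL0, Fin.sum_univ_two]
    have hGx := congrArg (pderiv 0) (hfac i)
    have hGy := congrArg (pderiv 1) (hfac i)
    rw [← hFx] at hGx
    rw [← hFy] at hGy
    set G := ∏ k ∈ Finset.univ.erase i, f k with hG
    rw [Derivation.leibniz, smul_eq_mul, smul_eq_mul] at hGx hGy
    refine ⟨a * (d i : Rp 2) + b * (pderiv 1 G * pderiv 0 (f i) - pderiv 0 G * pderiv 1 (f i)), ?_⟩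
    simp only [Matrix.cons_val_zero, Matrix.cons_val_one]
    rw [hGx, hGy]
    linear_combination a * heu i)
  refine ⟨LinearEquiv.ofBijective L ⟨?_, ?_⟩⟩
  · rw [injective_iff_map_eq_zero]
    rintro ⟨a, b⟩ h
    have h1 : L0 (a, b) = 0 := congrArg Subtype.val h
    rw [hL0] at h1
    have e0 : a * X 0 + b * Fy = 0 := congrFun h1 0
    have e1 : a * X 1 - b * Fx = 0 := congrFun h1 1
    have ha : a = 0 := by
      have : a * F = 0 := by
        linear_combination (C ((D : ℂ)⁻¹) * Fx) * e0 + (C ((D : ℂ)⁻¹) * Fy) * e1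
          - a * C ((D : ℂ)⁻¹) * euler - a * F * hCD
      exact (mul_eq_zero.mp this).resolve_right hF0
    have hb : b = 0 := by
      by_contra hb
      subst ha
      rw [zero_mul, zero_add, mul_eq_zero] at e0
      rw [zero_mul, zero_sub, neg_eq_zero, mul_eq_zero] at e1
      exact hnz ⟨e1.resolve_left hb, e0.resolve_left hb⟩
    rw [ha, hb]
    rfl
  · rintro ⟨θ, hθ⟩
    obtain ⟨g, hg⟩ := der_prod_dvd m f θ hθ Finset.univ
    rw [← hF, Fin.sum_univ_two, ← hFx, ← hFy] at hg
    set c := C ((D : ℂ)⁻¹) * g with hc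
    have h0 : (θ 0 - c * X 0) * Fx + (θ 1 - c * X 1) * Fy = 0 := by
      linear_combination hg - c * euler - g * F * hCD
    suffices h : ∃ b, θ 0 - c * X 0 = b * Fy ∧ θ 1 - c * X 1 = - b * Fx by
      obtain ⟨b, hb0, hb1⟩ := h
      refine ⟨(c, b), Subtype.ext ?_⟩
      show L0 (c, b) = θ
      rw [hL0]
      ext1 j
      fin_cases j
      · show c * X 0 + b * Fy = θ 0
        linear_combination - hb0
      · show c * X 1 - b * Fx = θ 1
        linear_combination - hb1
    generalize θ 0 - c * X 0 = p at h0 ⊢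
    generalize θ 1 - c * X 1 = q at h0 ⊢
    obtain ⟨r, hr⟩ : Fx ∣ q :=
      hrel.dvd_of_dvd_mul_right ⟨-p, by linear_combination h0⟩
    by_cases hx : Fx = 0
    · have hy : IsUnit Fy := by
        rw [hx] at hrel
        exact hrel (dvd_zero _) dvd_rfl
      obtain ⟨w, hw⟩ := hy.exists_left_inv
      refine ⟨p * w, ?_, ?_⟩
      · linear_combination - p * hw
      · rw [hr, hx]; ring
    · refine ⟨-r, ?_, ?_⟩
      · have : Fx * (p + r * Fy) = 0 := by
          linear_combination h0 - Fy * hr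
        linear_combination (mul_eq_zero.mp this).resolve_left hx
      · rw [hr]; ring

end PlaneCase
theorem exists_res_of_pd (n : ℕ) (M : Type) [AddCommGroup M] [Module (Rp n) M] (p : ℕ)
    (h : CategoryTheory.HasProjectiveDimensionLT (ModuleCat.of (Rp n) M) (p+1)) :
    ∃ P : CategoryTheory.ProjectiveResolution (ModuleCat.of (Rp n) M),
      ∀ k : ℕ, p < k → CategoryTheory.Limits.IsZero (P.complex.X k) :=
  exists_resolution p _ h

/-- Every SNC arrangement is tame: `Ω^p = ⋀^p Hom(Der(A), R)` has
projective dimension at most `p` for `0 ≤ p ≤ n`. -/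
theorem snc_is_tame (n m : ℕ) (hn : 2 ≤ n) (hm : n + 1 ≤ m)
    (f : Fin m → Rp n) (d : Fin m → ℕ)
    (hf0 : ∀ i, f i ≠ 0) (hfh : ∀ i, (f i).IsHomogeneous (d i)) (hd : ∀ i, 1 ≤ d i)
    (hsnc : SNC n m f) :
    ∀ p : ℕ, p ≤ n →
      ∃ P : CategoryTheory.ProjectiveResolution
          (ModuleCat.of (Rp n)
            (↥(⋀[Rp n]^p (Module.Dual (Rp n) ↥(DerA n m f))))),
        ∀ k : ℕ, p < k → CategoryTheory.Limits.IsZero (P.complex.X k) := by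
  intro p hp
  have hs := exists_section n m hn f d hfh hsnc
  apply exists_res_of_pd
  rcases Nat.lt_or_ge 2 n with h3 | h2
  · exact (tame_dual n m h3 f hf0 hs p hp).1
  · obtain rfl : n = 2 := le_antisymm h2 hn
    obtain ⟨e⟩ := derA_free m f d (by omega) hf0 hfh hd hsnc.1 hs
    have : Module.Free (Rp 2) (DerA 2 m f) := Module.Free.of_equiv e
    have : Module.Finite (Rp 2) (DerA 2 m f) := Module.Finite.equiv e
    exact pd_free _ p
end
end
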